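/- arXiv:math/0608328 — 2 statements merged into one kernel-verified Lean document; each statement's English description precedes it below -/
import Mathlib

section
/- Let p be a prime, let l ≥ 0 and n be integers with n > p, and let r be an integer. Then F^{(l)}_p(n,r) + [l>0]·F^{(l−1)}_p(n−p, r) ≡ −Σ_{k=1}^{p−1} (1/k)·Σ_{j=0}^{k−1} F^{(l)}_p(n−p+1, r−j) (mod p). -/
open Finset

/-- `x ≡ y (mod p^c)` for rationals: `x = y` or the `p`-adic valuation of `x - y`
is at least `c`. -/
def modCong (p : ℕ) (c : ℤ) (x y : ℚ) : Prop :=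
  x = y ∨ c ≤ padicValRat p (x - y)

/-- The binomial coefficient `binom(x,l) = x(x-1)⋯(x-l+1)/l!` for an integer `x`. -/
def intBinom (x : ℤ) (l : ℕ) : ℚ := (∏ i ∈ Finset.range l, ((x:ℚ) - (i:ℚ))) / (l.factorial : ℚ)

/-- The extended Fleck quotient
`F^{(l)}_{p^a}(n,r) = (-p)^{-⌊(n - l p^a - p^{a-1})/φ(p^a)⌋}
  ∑_{0 ≤ k ≤ n, k ≡ r (mod p^a)} (-1)^k binom(n,k) binom((k-r)/p^a, l)`. -/
noncomputable def Fpa (p a l n : ℕ) (r : ℤ) : ℚ :=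
  (-(p:ℚ)) ^ (-(Int.fdiv ((n:ℤ) - (l:ℤ) * (p:ℤ)^a - (p:ℤ)^(a-1)) (Nat.totient (p^a)))) *
    ∑ k ∈ Finset.range (n+1),
      if ((k:ℤ) - r) % ((p:ℤ)^a) = 0 then
        (-1:ℚ)^k * (n.choose k : ℚ) * intBinom (((k:ℤ) - r) / ((p:ℤ)^a)) l
      else 0

open Polynomial in
/-- The additive functional `X ^ k ↦ [k ≡ r (mod p)] * binom((k - r) / p, l)` on `ℤ[X]`. -/
noncomputable def residueBinom (p l : ℕ) (r : ℤ) : ℤ[X] →ₗ[ℤ] ℤ :=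
  Polynomial.lsum fun k =>
    (if ((k : ℤ) - r) % p = 0 then Ring.choose (((k : ℤ) - r) / p) l else 0) • LinearMap.id

section Residue

open Polynomial

lemma residueBinom_monomial (p l : ℕ) (r : ℤ) (k : ℕ) (a : ℤ) :
    residueBinom p l r (monomial k a) =
      (if ((k : ℤ) - r) % p = 0 then Ring.choose (((k : ℤ) - r) / p) l else 0) * a := by
  rw [residueBinom, lsum_apply, sum_monomial_index _ _ (LinearMap.map_zero _), LinearMap.smul_apply,
    LinearMap.id_apply, smul_eq_mul]

lemma residueBinom_X_pow_mul (p l : ℕ) (r : ℤ) (j : ℕ) (f : ℤ[X]) :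
    residueBinom p l r (X ^ j * f) = residueBinom p l (r - j) f := by
  induction f using Polynomial.induction_on' with
  | add f g hf hg => rw [mul_add, map_add, map_add, hf, hg]
  | monomial k a =>
    rw [X_pow_mul_monomial, residueBinom_monomial, residueBinom_monomial]
    have : ((k + j : ℕ) : ℤ) - r = k - (r - j) := by push_cast; ring
    rw [this]

lemma residueBinom_X_pow_prime_mul {p : ℕ} (hp : 0 < p) (l : ℕ) (r : ℤ) (f : ℤ[X]) :
    residueBinom p l r (X ^ p * f) =
      residueBinom p l r f + if 0 < l then residueBinom p (l - 1) r f else 0 := by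
  induction f using Polynomial.induction_on' with
  | add f g hf hg =>
    rw [mul_add, map_add, map_add, hf, hg]
    split_ifs
    · rw [map_add]
      ring
    · ring
  | monomial k a =>
    simp only [X_pow_mul_monomial, residueBinom_monomial]
    have h : ((k + p : ℕ) : ℤ) - r = (k - r) + 1 * p := by push_cast; ring
    have hp' : (p : ℤ) ≠ 0 := by positivity
    rw [h, Int.add_mul_emod_self_right, Int.add_mul_ediv_right _ _ hp']
    cases l with
    | zero => simp
    | succ l =>
      rw [Ring.choose_succ_succ]
      simp only [Nat.zero_lt_succ, if_true, Nat.add_sub_cancel]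
      split_ifs <;> ring

/-- The numerator of the Fleck quotient. -/
noncomputable def fleckSum (p l n : ℕ) (r : ℤ) : ℤ := residueBinom p l r ((1 - X) ^ n)

lemma one_sub_X_pow_eq_sum (n : ℕ) :
    (1 - X : ℤ[X]) ^ n = ∑ k ∈ range (n + 1), monomial k ((-1) ^ k * (n.choose k : ℤ)) := by
  rw [sub_eq_neg_add, add_pow]
  refine sum_congr rfl fun k _ => ?_
  rw [← C_mul_X_pow_eq_monomial, neg_pow]
  simp
  ring

lemma fleckSum_eq_sum (p l n : ℕ) (r : ℤ) :
    fleckSum p l n r = ∑ k ∈ range (n + 1),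
      if ((k : ℤ) - r) % p = 0 then
        (-1) ^ k * (n.choose k : ℤ) * Ring.choose (((k : ℤ) - r) / p) l
      else 0 := by
  rw [fleckSum, one_sub_X_pow_eq_sum, map_sum]
  refine sum_congr rfl fun k _ => ?_
  rw [residueBinom_monomial]
  split_ifs <;> ring

lemma one_sub_X_pow_eq_sum_X_pow_sub_one {p : ℕ} (hp : p ≠ 0) :
    (1 - X : ℤ[X]) ^ p =
      ∑ k ∈ range (p + 1), ((-1) ^ k * (p.choose k : ℤ[X])) * (X ^ k - 1) := by
  have h (x : ℤ[X]) :
      (1 - x) ^ p = ∑ k ∈ range (p + 1), ((-1) ^ k * (p.choose k : ℤ[X])) * x ^ k := by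
    rw [sub_eq_neg_add, add_pow]
    refine sum_congr rfl fun k _ => ?_
    rw [neg_pow]
    simp
    ring
  have h1 := h 1
  rw [sub_self, zero_pow hp] at h1
  simp only [one_pow] at h1
  simp only [mul_sub, sum_sub_distrib, ← h1, h X, sub_zero]

lemma one_sub_X_pow_prime {p : ℕ} (hp : p.Prime) :
    (1 - X : ℤ[X]) ^ p =
      (-1) ^ p * (X ^ p - 1) - ∑ k ∈ Icc 1 (p - 1), ∑ j ∈ range k,
        C ((p : ℤ) * ((-1) ^ k * (p.choose k / p : ℕ))) * (X ^ j * (1 - X)) := by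
  rw [one_sub_X_pow_eq_sum_X_pow_sub_one hp.ne_zero, sum_range_succ, Nat.choose_self]
  have h0 : range p = insert 0 (Icc 1 (p - 1)) := by
    ext i
    have := hp.pos
    simp only [mem_range, mem_insert, mem_Icc]
    omega
  rw [h0, sum_insert (by simp)]
  have : ∀ k ∈ Icc 1 (p - 1), ((-1) ^ k * (p.choose k : ℤ[X])) * (X ^ k - 1) =
      - ∑ j ∈ range k, C ((p : ℤ) * ((-1) ^ k * (p.choose k / p : ℕ))) * (X ^ j * (1 - X)) := by
    intro k hk
    rw [mem_Icc] at hk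
    have hd : p ∣ p.choose k := hp.dvd_choose_self (by omega) (by have := hp.pos; omega)
    rw [← mul_sum, ← sum_mul, ← geom_sum_mul]
    have hC : (C ((p : ℤ) * ((-1) ^ k * (p.choose k / p : ℕ))) : ℤ[X]) =
        (-1) ^ k * (p.choose k : ℤ[X]) := by
      obtain ⟨q, hq⟩ := hd
      rw [hq, Nat.mul_div_cancel_left _ hp.pos]
      simp
      ring
    rw [hC]
    ring
  rw [sum_congr rfl this, sum_neg_distrib]
  simp
  ring

lemma fleckSum_add_prime {p : ℕ} (hp : p.Prime) (l m : ℕ) (r : ℤ) :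
    fleckSum p l (m + p) r =
      (-1) ^ p * (if 0 < l then fleckSum p (l - 1) m r else 0) -
        p * ∑ k ∈ Icc 1 (p - 1), ((-1) ^ k * (p.choose k / p : ℕ)) *
          ∑ j ∈ range k, fleckSum p l (m + 1) (r - j) := by
  have h : (1 - X : ℤ[X]) ^ (m + p) =
      ((-1 : ℤ) ^ p) • (X ^ p * (1 - X) ^ m - (1 - X) ^ m) -
        ∑ k ∈ Icc 1 (p - 1), ∑ j ∈ range k,
          ((p : ℤ) * ((-1) ^ k * (p.choose k / p : ℕ))) • (X ^ j * (1 - X) ^ (m + 1)) := by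
    rw [pow_add, one_sub_X_pow_prime hp, mul_sub, mul_sum]
    simp only [mul_sum]
    congr 1
    · rw [smul_eq_C_mul]
      simp
      ring
    · refine sum_congr rfl fun k _ => sum_congr rfl fun j _ => ?_
      rw [smul_eq_C_mul]
      ring
  unfold fleckSum
  rw [h]
  simp only [map_sub, map_sum, map_smul, residueBinom_X_pow_prime_mul hp.pos,
    residueBinom_X_pow_mul, smul_eq_mul, mul_sum]
  congr 1
  · ring
  · refine sum_congr rfl fun k _ => sum_congr rfl fun j _ => ?_
    ring

end Residue

/-- The exponent of `-p` in the Fleck quotient. -/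
def fleckExp (p l n : ℕ) : ℤ := ((n : ℤ) - l * p - 1) / ((p : ℤ) - 1)

lemma fleckExp_add_prime {p : ℕ} (hp : p.Prime) (l m : ℕ) :
    fleckExp p l (m + p) = fleckExp p l (m + 1) + 1 := by
  have := hp.two_le
  unfold fleckExp
  rw [← Int.add_mul_ediv_right _ _ (by omega)]
  congr 1
  push_cast
  ring

lemma fleckExp_pred (p m : ℕ) {l : ℕ} (hl : 0 < l) :
    fleckExp p (l - 1) m = fleckExp p l (m + p) := by
  obtain ⟨l, rfl⟩ := Nat.exists_eq_succ_of_ne_zero hl.ne'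
  unfold fleckExp
  congr 1
  simp
  ring

lemma fleckExp_nonpos {p n : ℕ} (l : ℕ) (hp : p.Prime) (h : n < p) : fleckExp p l n ≤ 0 := by
  have := hp.two_le
  unfold fleckExp
  have hlp : (0 : ℤ) ≤ l * p := by positivity
  exact Int.lt_add_one_iff.mp (Int.ediv_lt_of_lt_mul (by omega) (by omega))

/-- Wan's divisibility for a prime modulus. -/
lemma pow_fleckExp_dvd_fleckSum {p : ℕ} (hp : p.Prime) (n l : ℕ) (r : ℤ) :
    (p : ℤ) ^ (fleckExp p l n).toNat ∣ fleckSum p l n r := by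
  induction n using Nat.strong_induction_on generalizing l r with
  | _ n ih =>
    rcases lt_or_ge n p with h | h
    · simp [Int.toNat_of_nonpos (fleckExp_nonpos l hp h)]
    · obtain ⟨m, rfl⟩ := Nat.exists_eq_add_of_le' h
      have h2 := hp.two_le
      rw [fleckSum_add_prime hp]
      refine dvd_sub (Dvd.dvd.mul_left ?_ _) ?_
      · split_ifs with hl
        · rw [← fleckExp_pred p m hl]
          exact ih m (by omega) _ _
        · exact dvd_zero _
      · rw [fleckExp_add_prime hp]
        refine (pow_dvd_pow (p : ℤ)
          (show _ ≤ 1 + (fleckExp p l (m + 1)).toNat by omega)).trans ?_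
        rw [pow_add, pow_one]
        exact mul_dvd_mul_left _ (dvd_sum fun k _ =>
          Dvd.dvd.mul_left (dvd_sum fun j _ => ih _ (by omega) _ _) _)

lemma intBinom_eq_choose (x : ℤ) (l : ℕ) : intBinom x l = (Ring.choose x l : ℤ) := by
  have h := Ring.descPochhammer_eq_factorial_smul_choose x l
  rw [← Polynomial.eval_eq_smeval, descPochhammer_eval_eq_prod_range, nsmul_eq_mul] at h
  have hf : (l.factorial : ℚ) ≠ 0 := by positivity
  rw [intBinom, div_eq_iff hf]
  have := congrArg (Int.cast : ℤ → ℚ) h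
  push_cast at this
  rw [this, mul_comm]

lemma Fpa_one_eq {p : ℕ} (hp : p.Prime) (l n : ℕ) (r : ℤ) :
    Fpa p 1 l n r = (-(p : ℚ)) ^ (-fleckExp p l n) * fleckSum p l n r := by
  have h2 := hp.two_le
  unfold Fpa
  rw [fleckSum_eq_sum, pow_one, pow_one, Nat.totient_prime hp,
    Int.fdiv_eq_ediv_of_nonneg _ (by positivity), Nat.cast_sub (by omega)]
  simp only [Nat.sub_self, pow_zero, Nat.cast_one, intBinom_eq_choose, fleckExp]
  push_cast
  simp

lemma exists_int_eq_Fpa_one {p : ℕ} (hp : p.Prime) (l n : ℕ) (r : ℤ) :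
    ∃ z : ℤ, Fpa p 1 l n r = z := by
  have hp0 : (p : ℚ) ≠ 0 := by exact_mod_cast hp.ne_zero
  obtain ⟨z, hz⟩ := pow_fleckExp_dvd_fleckSum hp n l r
  rw [Fpa_one_eq hp]
  rcases le_total 0 (fleckExp p l n) with h | h
  · obtain ⟨e, he⟩ := Int.eq_ofNat_of_zero_le h
    refine ⟨(-1) ^ e * z, ?_⟩
    rw [hz, he]
    simp only [Int.toNat_natCast, zpow_neg, zpow_natCast]
    push_cast
    rw [neg_pow (p : ℚ), mul_inv, ← inv_pow (-1 : ℚ)]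
    field_simp
  · obtain ⟨e, he⟩ := Int.eq_ofNat_of_zero_le (neg_nonneg.mpr h)
    refine ⟨(-p) ^ e * fleckSum p l n r, ?_⟩
    rw [he, zpow_natCast]
    push_cast
    rfl

lemma Fpa_one_add_prime {p : ℕ} (hp : p.Prime) (l m : ℕ) (r : ℤ) :
    Fpa p 1 l (m + p) r =
      (-1) ^ p * (if 0 < l then Fpa p 1 (l - 1) m r else 0) +
        ∑ k ∈ Icc 1 (p - 1), ((-1) ^ k * ((p.choose k / p : ℕ) : ℚ)) *
          ∑ j ∈ range k, Fpa p 1 l (m + 1) (r - j) := by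
  have hp0 : -(p : ℚ) ≠ 0 := neg_ne_zero.mpr (by exact_mod_cast hp.ne_zero)
  have hif : (if 0 < l then Fpa p 1 (l - 1) m r else 0) =
      (-(p : ℚ)) ^ (-fleckExp p l (m + p)) *
        ((if 0 < l then fleckSum p (l - 1) m r else 0 : ℤ) : ℚ) := by
    split_ifs with hl
    · rw [Fpa_one_eq hp, fleckExp_pred p m hl]
    · simp
  have hpow : (-(p : ℚ)) ^ (-fleckExp p l (m + 1)) =
      (-(p : ℚ)) ^ (-fleckExp p l (m + p)) * (-(p : ℚ)) := by
    rw [← zpow_add_one₀ hp0, fleckExp_add_prime hp]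
    congr 1
    ring
  rw [hif]
  simp only [Fpa_one_eq hp]
  rw [fleckSum_add_prime hp, hpow]
  simp only [← mul_sum]
  simp only [mul_left_comm _ ((-(p : ℚ)) ^ (-fleckExp p l (m + p)) * (-(p : ℚ)))]
  rw [← mul_sum]
  simp only [Int.cast_sub, Int.cast_mul, Int.cast_sum, Int.cast_pow, Int.cast_neg, Int.cast_one,
    Int.cast_natCast]
  ring

lemma prime_dvd_neg_one_pow_mul_choose_add_one {p : ℕ} (hp : p.Prime) {k : ℕ} (hk : k < p) :
    (p : ℤ) ∣ (-1) ^ (k + 1) * ((p - 1).choose k : ℤ) + 1 := by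
  induction k with
  | zero => simp
  | succ k ih =>
    have hs : p.choose (k + 1) = (p - 1).choose k + (p - 1).choose (k + 1) :=
      Nat.choose_eq_choose_pred_add hp.pos k.succ_pos
    have hd : (p : ℤ) ∣ (p.choose (k + 1) : ℤ) :=
      Int.natCast_dvd_natCast.mpr (hp.dvd_choose_self k.succ_ne_zero hk)
    rw [hs, Nat.cast_add] at hd
    have := dvd_add (ih (by omega)) (hd.mul_left ((-1) ^ (k + 2)))
    have he : (-1) ^ (k + 1 + 1) * ((p - 1).choose (k + 1) : ℤ) + 1 =
        (-1) ^ (k + 1) * ((p - 1).choose k : ℤ) + 1 +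
          (-1) ^ (k + 2) * ((p - 1).choose k + (p - 1).choose (k + 1) : ℤ) := by ring
    rw [he]
    exact this

lemma prime_dvd_mul_choose_div_add_one {p : ℕ} (hp : p.Prime) {k : ℕ} (hk : k ∈ Icc 1 (p - 1)) :
    (p : ℤ) ∣ (-1) ^ k * (p.choose k / p : ℕ) * k + 1 := by
  rw [mem_Icc] at hk
  have hpos := hp.pos
  obtain ⟨k, rfl⟩ := Nat.exists_eq_add_of_le' hk.1
  have hd : p ∣ p.choose (k + 1) := hp.dvd_choose_self k.succ_ne_zero (by omega)
  have h : p.choose (k + 1) / p * (k + 1) = (p - 1).choose k := by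
    apply Nat.eq_of_mul_eq_mul_left hp.pos
    rw [← mul_assoc, Nat.mul_div_cancel' hd]
    have := Nat.add_one_mul_choose_eq (p - 1) k
    rw [Nat.sub_add_cancel hpos] at this
    exact this.symm
  have := prime_dvd_neg_one_pow_mul_choose_add_one hp (show k < p by omega)
  rw [mul_assoc, ← Nat.cast_mul, h]
  exact this

lemma modCong_one_of_mul_sub_eq {p : ℕ} (hp : p.Prime) {x y : ℚ} {M : ℕ} {z : ℤ}
    (hM : ¬ p ∣ M) (h : (M : ℚ) * (x - y) = p * z) : modCong p 1 x y := by
  by_cases hxy : x = y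
  · exact Or.inl hxy
  · right
    have := Fact.mk hp
    have hM0 : (M : ℚ) ≠ 0 := by
      rintro h0
      exact hM (by simp [Nat.cast_eq_zero.mp h0])
    have hs : x - y ≠ 0 := sub_ne_zero.mpr hxy
    have hp0 : (p : ℚ) ≠ 0 := by exact_mod_cast hp.ne_zero
    have hz : (z : ℚ) ≠ 0 := by
      rintro h0
      rw [h0, mul_zero] at h
      exact mul_ne_zero hM0 hs h
    have hv := congrArg (padicValRat p) h
    rw [padicValRat.mul hM0 hs, padicValRat.mul hp0 hz, padicValRat.of_nat,
      padicValNat.eq_zero_of_not_dvd hM, padicValRat.self hp.one_lt, padicValRat.of_int] at hv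
    push_cast at hv
    omega

theorem stmt17 (p l n : ℕ) (hp : p.Prime) (hn : p < n) (r : ℤ) :
    modCong p 1
      (Fpa p 1 l n r + (if 0 < l then Fpa p 1 (l-1) (n-p) r else 0))
      (-(∑ k ∈ Finset.Icc 1 (p-1), (1/(k:ℚ)) *
          ∑ j ∈ Finset.range k, Fpa p 1 l (n-p+1) (r - (j:ℤ)))) := by
  obtain ⟨m, rfl⟩ := Nat.exists_eq_add_of_le' hn.le
  rw [Nat.add_sub_cancel, Fpa_one_add_prime hp]
  choose F hF using exists_int_eq_Fpa_one hp
  have hprev : ∃ z : ℤ, (if 0 < l then Fpa p 1 (l - 1) m r else 0) = z := by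
    split_ifs
    · exact exists_int_eq_Fpa_one hp _ _ _
    · exact ⟨0, by simp⟩
  obtain ⟨A, hA⟩ := hprev
  have hsign : (p : ℤ) ∣ (-1) ^ p + 1 := by
    rcases hp.eq_two_or_odd' with rfl | h
    · norm_num
    · simp [h.neg_one_pow]
  obtain ⟨s, hs⟩ := hsign
  have hcoef : ∀ k : ℕ, ∃ d : ℤ, k ∈ Icc 1 (p - 1) →
      ((p - 1).factorial : ℚ) * ((-1) ^ k * ((p.choose k / p : ℕ) : ℚ) + 1 / k) = p * d := by
    intro k
    by_cases hk : k ∈ Icc 1 (p - 1)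
    · obtain ⟨d, hd⟩ := prime_dvd_mul_choose_div_add_one hp hk
      rw [mem_Icc] at hk
      obtain ⟨q, hq⟩ := Nat.dvd_factorial (show 0 < k from hk.1) hk.2
      refine ⟨q * d, fun _ => ?_⟩
      have hk0 : (k : ℚ) ≠ 0 := by
        have := hk.1
        positivity
      have hd' := congrArg (Int.cast : ℤ → ℚ) hd
      simp only [Int.cast_add, Int.cast_mul, Int.cast_pow, Int.cast_neg, Int.cast_one,
        Int.cast_natCast] at hd'
      rw [hq, Nat.cast_mul, Int.cast_mul, Int.cast_natCast, mul_left_comm, ← hd']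
      field_simp
    · exact ⟨0, fun h => absurd h hk⟩
  choose d hd using hcoef
  have hM : ¬ p ∣ (p - 1).factorial := by
    have := hp.pos
    rw [hp.dvd_factorial]
    omega
  refine modCong_one_of_mul_sub_eq hp hM (z := (p - 1).factorial * s * A +
    ∑ k ∈ Icc 1 (p - 1), d k * ∑ j ∈ range k, F l (m + 1) (r - j)) ?_
  have hs' := congrArg (Int.cast : ℤ → ℚ) hs
  push_cast at hs'
  rw [hA]
  simp only [hF]
  push_cast
  rw [mul_add, mul_sum]
  simp only [← mul_assoc (p : ℚ)]
  rw [← sum_congr rfl fun k hk => congrArg (· * _) (hd k hk)]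
  simp only [mul_assoc, ← mul_sum, add_mul, sum_add_distrib]
  linear_combination ((p - 1).factorial : ℚ) * A * hs'
end

section
/- Let p be a prime, let a ≥ 1, l ≥ 0, n ≥ 0 be integers, let r be an integer, let s,t ∈ {0,…,p^{a−1}−1}, and let m ≥ 0 be an integer with m ≡ −n (mod p). Assume that at least one of the following holds: (i) a = 1, or p | n, or (p−1) ∤ (n−l−1); (ii) a ≥ 2, p ≠ 2 and ⌊s/p^{a−2}⌋ = 2·⌊t/p^{a−2}⌋; (iii) a ≥ 2 and ⌊s/p^{a−2}⌋ = ⌊t/p^{a−2}⌋ = p−1. Then (−1)^{l+t−1}·F^{(l)}_{p^a}(p^{a−1}·n + s, p^{a−1}·r + t) ≡ [n>l]·binom(s,t)·binom(⌊(n−l−1)/(p−1)⌋, l)·(n−l)_*!·B^{(m)}_{(n−l)^*}(−r) (mod p). -/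
open Finset

/-- `n_*`: the unique integer in `{1,…,p-1}` with `n_* ≡ n (mod p-1)`. -/
def nLow (p n : ℕ) : ℕ := ((((n:ℤ) - 1) % ((p:ℤ) - 1)) + 1).toNat

/-- `n^*`: the unique integer in `{0,…,p-2}` with `n^* ≡ -n (mod p-1)`. -/
def nUp (p n : ℕ) : ℕ := ((-(n:ℤ)) % ((p:ℤ) - 1)).toNat

/-- The `m`-th order Bernoulli number
`B_k^{(m)} = k! ∑_{i₁+⋯+i_m = k} ∏_j B_{i_j}/i_j!`. -/
noncomputable def bernHigher (m k : ℕ) : ℚ :=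
  (k.factorial : ℚ) *
    ∑ i ∈ Finset.Nat.antidiagonalTuple m k, ∏ j, bernoulli (i j) / (i j).factorial

/-- The `m`-th order Bernoulli polynomial
`B_k^{(m)}(t) = ∑_{j=0}^k binom(k,j) B_j^{(m)} t^{k-j}`. -/
noncomputable def bernHigherPoly (m k : ℕ) (t : ℚ) : ℚ :=
  ∑ j ∈ range (k+1), (k.choose j : ℚ) * bernHigher m j * t^(k-j)

namespace FleckQuotient

open Polynomial

/-- The weight of the exponent `k` in the sums defining extended Fleck quotients modulo `q`. -/
noncomputable def residueWeight (q : ℕ) (r : ℤ) (l k : ℕ) : ℤ :=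
  if ((k : ℤ) - r) % (q : ℤ) = 0 then Ring.choose (((k : ℤ) - r) / (q : ℤ)) l else 0

/-- The linear functional sending `X ^ k` to `residueWeight q r l k`. -/
noncomputable def residueSum (q : ℕ) (r : ℤ) (l : ℕ) : ℤ[X] →ₗ[ℤ] ℤ :=
  Polynomial.lsum fun k => residueWeight q r l k • LinearMap.id

lemma residueSum_monomial (q : ℕ) (r : ℤ) (l k : ℕ) (c : ℤ) :
    residueSum q r l (monomial k c) = residueWeight q r l k * c := by
  simp [residueSum, Polynomial.lsum_apply, Polynomial.sum_monomial_index]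

lemma residueSum_X_mul (q : ℕ) (r : ℤ) (l : ℕ) (f : ℤ[X]) :
    residueSum q r l (X * f) = residueSum q (r - 1) l f := by
  induction f using Polynomial.induction_on' with
  | add f g hf hg => rw [mul_add, map_add, map_add, hf, hg]
  | monomial k c =>
    rw [X_mul_monomial, residueSum_monomial, residueSum_monomial, residueWeight, residueWeight]
    have : ((k + 1 : ℕ) : ℤ) - r = (k : ℤ) - (r - 1) := by push_cast; ring
    rw [this]

lemma residueSum_X_pow_mul (q : ℕ) (r : ℤ) (l j : ℕ) (f : ℤ[X]) :
    residueSum q r l (X ^ j * f) = residueSum q (r - j) l f := by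
  induction j generalizing r with
  | zero => simp
  | succ j ih =>
    rw [pow_succ', mul_assoc, residueSum_X_mul, ih]
    congr 2
    push_cast; ring

lemma residueWeight_add (q : ℕ) (hq : 0 < q) (r : ℤ) (l k : ℕ) :
    residueWeight q r (l + 1) (k + q) = residueWeight q r (l + 1) k + residueWeight q r l k := by
  have h1 : ((k + q : ℕ) : ℤ) - r = ((k : ℤ) - r) + q := by push_cast; ring
  have hq' : (q : ℤ) ≠ 0 := by positivity
  simp only [residueWeight, h1, Int.add_emod_right]
  split_ifs with h
  · rw [Int.add_ediv_of_dvd_right (dvd_refl _), Int.ediv_self hq', Ring.choose_succ_succ, add_comm]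
  · simp

lemma residueWeight_zero_add (q : ℕ) (r : ℤ) (k : ℕ) :
    residueWeight q r 0 (k + q) = residueWeight q r 0 k := by
  have h1 : ((k + q : ℕ) : ℤ) - r = ((k : ℤ) - r) + q := by push_cast; ring
  simp only [residueWeight, h1, Int.add_emod_right, Ring.choose_zero_right]

lemma residueSum_succ_mul (q : ℕ) (hq : 0 < q) (r : ℤ) (l : ℕ) (f : ℤ[X]) :
    residueSum q r (l + 1) ((X ^ q - 1) * f) = residueSum q r l f := by
  induction f using Polynomial.induction_on' with
  | add f g hf hg => rw [mul_add, map_add, map_add, hf, hg]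
  | monomial k c =>
    rw [sub_mul, one_mul, map_sub, X_pow_mul_monomial, residueSum_monomial, residueSum_monomial,
      residueSum_monomial, residueWeight_add q hq]
    ring

lemma residueSum_zero_mul (q : ℕ) (r : ℤ) (f : ℤ[X]) :
    residueSum q r 0 ((X ^ q - 1) * f) = 0 := by
  induction f using Polynomial.induction_on' with
  | add f g hf hg => rw [mul_add, map_add, hf, hg, add_zero]
  | monomial k c =>
    rw [sub_mul, one_mul, map_sub, X_pow_mul_monomial, residueSum_monomial, residueSum_monomial,
      residueWeight_zero_add, sub_self]

lemma residueSum_C_mul (q : ℕ) (r : ℤ) (l : ℕ) (c : ℤ) (f : ℤ[X]) :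
    residueSum q r l (C c * f) = c * residueSum q r l f := by
  rw [← smul_eq_C_mul, map_smul, smul_eq_mul]

/-- The polynomials whose residue sums modulo `p` are as divisible by `p` as those of
`(X - 1) ^ k`. -/
noncomputable def fleckIdeal (p k : ℕ) : Ideal ℤ[X] where
  carrier := {f | ∀ (r : ℤ) (l c : ℕ), l * p + 1 + c * (p - 1) ≤ k →
    (p : ℤ) ^ c ∣ residueSum p r l f}
  add_mem' hf hg r l c h := by
    rw [map_add]
    exact dvd_add (hf r l c h) (hg r l c h)
  zero_mem' r l c _ := by simp
  smul_mem' g f hf r l c h := by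
    rw [smul_eq_mul]
    induction g using Polynomial.induction_on' with
    | add g₁ g₂ h₁ h₂ =>
      rw [add_mul, map_add]
      exact dvd_add h₁ h₂
    | monomial j b =>
      rw [← C_mul_X_pow_eq_monomial, mul_assoc, residueSum_C_mul, residueSum_X_pow_mul]
      exact (hf _ l c h).mul_left _

lemma mem_fleckIdeal {p k : ℕ} {f : ℤ[X]} : f ∈ fleckIdeal p k ↔
    ∀ (r : ℤ) (l c : ℕ), l * p + 1 + c * (p - 1) ≤ k → (p : ℤ) ^ c ∣ residueSum p r l f :=
  Iff.rfl

lemma fleckIdeal_anti (p : ℕ) {j k : ℕ} (h : j ≤ k) : fleckIdeal p k ≤ fleckIdeal p j :=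
  fun _ hf r l c hc => hf r l c (hc.trans h)

lemma C_mul_mem_fleckIdeal {p k : ℕ} {f : ℤ[X]} (hf : f ∈ fleckIdeal p k) :
    C (p : ℤ) * f ∈ fleckIdeal p (k + (p - 1)) := by
  intro r l c hc
  rw [residueSum_C_mul]
  cases c with
  | zero => simp
  | succ c =>
    rw [pow_succ']
    refine mul_dvd_mul_left _ (hf r l c ?_)
    rw [add_mul] at hc
    omega

lemma C_pow_mul_mem_fleckIdeal {p k : ℕ} {f : ℤ[X]} (hf : f ∈ fleckIdeal p k) (e : ℕ) :
    C (p : ℤ) ^ e * f ∈ fleckIdeal p (k + e * (p - 1)) := by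
  induction e with
  | zero => simpa using hf
  | succ e ih =>
    rw [pow_succ', mul_assoc, add_mul, one_mul, ← add_assoc]
    exact C_mul_mem_fleckIdeal ih

/-- The polynomial `(z - 1)⁻¹ * ((z ^ p - 1) - (z - 1) ^ p) / p` at `z = X`. -/
noncomputable def logQuot (p : ℕ) : ℤ[X] :=
  ∑ i ∈ range (p - 1), C ((p.choose (i + 1) / p : ℕ) : ℤ) * (X - 1) ^ i

/-- A truncated logarithm of `X`: the polynomial `((X ^ p - 1) - (X - 1) ^ p) / p`. -/
noncomputable def truncLog (p : ℕ) : ℤ[X] := (X - 1) * logQuot p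

lemma X_pow_sub_one_eq {p : ℕ} (hp : p.Prime) :
    (X ^ p - 1 : ℤ[X]) = (X - 1) ^ p + C (p : ℤ) * truncLog p := by
  obtain ⟨k, rfl⟩ : ∃ k, p = k + 1 := ⟨p - 1, (Nat.succ_pred_eq_of_pos hp.pos).symm⟩
  have h : (X : ℤ[X]) ^ (k + 1) = ((X - 1) + 1) ^ (k + 1) := by ring
  rw [h, add_pow, Finset.sum_range_succ, Finset.sum_range_succ', truncLog, logQuot,
    Nat.add_sub_cancel, Finset.mul_sum, Finset.mul_sum]
  simp only [one_pow, mul_one, pow_zero, Nat.choose_self, Nat.choose_zero_right, Nat.cast_one]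
  have : ∀ i ∈ range k, (X - 1 : ℤ[X]) ^ (i + 1) * ((k + 1).choose (i + 1) : ℤ[X]) =
      C ((k + 1 : ℕ) : ℤ) * ((X - 1) *
        (C (((k + 1).choose (i + 1) / (k + 1) : ℕ) : ℤ) * (X - 1) ^ i)) := by
    intro i hi
    have hd : (k + 1) ∣ (k + 1).choose (i + 1) :=
      hp.dvd_choose_self (by omega) (by have := Finset.mem_range.1 hi; omega)
    have h2 : ((k + 1).choose (i + 1) : ℤ[X]) =
        C ((k + 1 : ℕ) : ℤ) * C (((k + 1).choose (i + 1) / (k + 1) : ℕ) : ℤ) := by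
      rw [← C_mul, ← Nat.cast_mul, Nat.mul_div_cancel' hd]
      simp
    rw [h2]
    ring
  rw [Finset.sum_congr rfl this]
  ring

lemma X_sub_one_pow_mem_fleckIdeal {p : ℕ} (hp : p.Prime) (n : ℕ) :
    (X - 1 : ℤ[X]) ^ n ∈ fleckIdeal p n := by
  have hp2 := hp.two_le
  induction n using Nat.strong_induction_on with
  | _ n ih =>
    intro r l c hc
    rcases lt_or_ge n p with hn | hn
    · have : c = 0 := by
        rcases Nat.eq_zero_or_pos c with h | h
        · exact h
        · have : 1 * (p - 1) ≤ c * (p - 1) := Nat.mul_le_mul_right _ h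
          omega
      simp [this]
    · obtain ⟨k, rfl⟩ := Nat.exists_eq_add_of_le' hn
      have e : (X - 1 : ℤ[X]) ^ (k + p) =
          (X ^ p - 1) * (X - 1) ^ k - C (p : ℤ) * (logQuot p * (X - 1) ^ (k + 1)) := by
        rw [X_pow_sub_one_eq hp, truncLog]
        ring
      rw [e, map_sub]
      refine dvd_sub ?_ ?_
      · cases l with
        | zero => rw [residueSum_zero_mul]; exact dvd_zero _
        | succ l =>
          rw [residueSum_succ_mul p hp.pos]
          refine ih k (by omega) r l c ?_
          rw [add_mul] at hc
          omega
      · exact C_mul_mem_fleckIdeal ((fleckIdeal p (k + 1)).mul_mem_left _ (ih (k + 1) (by omega)))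
          r l c (by omega)

lemma C_pow_mul_X_sub_one_pow_mul_mem {p : ℕ} (hp : p.Prime) {i e k : ℕ}
    (h : k ≤ i + e * (p - 1)) (f : ℤ[X]) :
    C (p : ℤ) ^ e * (X - 1) ^ i * f ∈ fleckIdeal p k :=
  (fleckIdeal p k).mul_mem_right _ (fleckIdeal_anti p h
    (C_pow_mul_mem_fleckIdeal (X_sub_one_pow_mem_fleckIdeal hp i) e))

lemma logQuot_eq_one_add {p : ℕ} (hp : p.Prime) : ∃ u : ℤ[X], logQuot p = 1 + (X - 1) * u := by
  have h : (X - C (1 : ℤ)) ∣ logQuot p - 1 := by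
    rw [dvd_iff_isRoot, IsRoot.def, logQuot]
    obtain ⟨k, hk⟩ : ∃ k, p - 1 = k + 1 := ⟨p - 2, by have := hp.two_le; omega⟩
    rw [hk, Finset.sum_range_succ']
    simp [eval_finsetSum, Nat.div_self hp.pos]
  obtain ⟨u, hu⟩ := h
  exact ⟨u, by rw [C_1] at hu; linear_combination hu⟩

lemma truncLog_pow_prime {p : ℕ} (hp : p.Prime) : ∃ a b : ℤ[X],
    truncLog p ^ p = (X ^ p - 1) - C (p : ℤ) * truncLog p +
      ((X - 1) ^ (2 * p) * a + C (p : ℤ) * (X - 1) ^ (p + 1) * b) := by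
  obtain ⟨u, hu⟩ := logQuot_eq_one_add hp
  obtain ⟨v, hv⟩ := exists_add_pow_prime_eq hp (1 : ℤ[X]) ((X - 1) * u)
  refine ⟨u ^ p, u * v, ?_⟩
  rw [X_pow_sub_one_eq hp, add_sub_cancel_right]
  nth_rewrite 1 [truncLog]
  rw [mul_pow, hu, hv, mul_pow]
  simp only [map_natCast]
  ring

lemma dvd_residueSum_X_mul_derivative (p : ℕ) (f : ℤ[X]) :
    (p : ℤ) ∣ residueSum p 0 0 (X * derivative f) := by
  induction f using Polynomial.induction_on' with
  | add f g hf hg =>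
    rw [map_add, mul_add, map_add]
    exact dvd_add hf hg
  | monomial k c =>
    rw [derivative_monomial, X_mul_monomial, residueSum_monomial, residueWeight]
    split_ifs with h
    · rcases k with _ | k
      · simp
      · rw [Nat.add_sub_cancel, sub_zero] at h
        exact ((Int.dvd_of_emod_eq_zero h).mul_left _).mul_left _
    · simp

lemma X_mul_derivative_truncLog {p : ℕ} (hp : p.Prime) :
    X * derivative (truncLog p) = X ^ p - X * (X - 1) ^ (p - 1) := by
  have h := congrArg derivative (X_pow_sub_one_eq hp)
  simp only [derivative_sub, derivative_one, sub_zero, derivative_add,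
    derivative_pow, derivative_C_mul, derivative_X, mul_one] at h
  have hC : (C (p : ℤ) : ℤ[X]) ≠ 0 := by simpa using hp.ne_zero
  apply mul_left_cancel₀ hC
  have hX : (X : ℤ[X]) ^ p = X * X ^ (p - 1) := by rw [← pow_succ', Nat.sub_add_cancel hp.one_le]
  rw [hX]
  simp only [map_natCast] at h ⊢
  linear_combination (-X) * h

lemma dvd_residueSum_of_X_sub_one_pow {p : ℕ} (hp : p.Prime) (r : ℤ) (f : ℤ[X]) :
    (p : ℤ) ∣ residueSum p r 0 ((X - 1) ^ p * f) := by
  have := C_pow_mul_X_sub_one_pow_mul_mem hp (i := p) (e := 0) (k := p) (by omega) f r 0 1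
    (by have := hp.two_le; omega)
  simpa using this

lemma dvd_residueSum_truncLog_pow {p n : ℕ} (hp : p.Prime) (hn : 0 < n) (hn' : n < p - 1) :
    (p : ℤ) ∣ residueSum p 0 0 (truncLog p ^ n) := by
  have h := dvd_residueSum_X_mul_derivative p (truncLog p ^ (n + 1))
  have e : X * derivative (truncLog p ^ (n + 1)) = C ((n + 1 : ℕ) : ℤ) *
      (truncLog p ^ n + ((X ^ p - 1) * truncLog p ^ n -
        (X - 1) ^ p * (X * logQuot p * truncLog p ^ (n - 1)))) := by
    have h1 : (X - 1 : ℤ[X]) ^ p = (X - 1) * (X - 1) ^ (p - 1) := by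
      rw [← pow_succ', Nat.sub_add_cancel hp.one_le]
    have h2 : truncLog p ^ n = (X - 1) * logQuot p * truncLog p ^ (n - 1) := by
      rw [← truncLog, ← pow_succ', Nat.sub_add_cancel hn]
    have h3 := X_mul_derivative_truncLog hp
    rw [derivative_pow_succ, h1]
    simp only [map_natCast, Nat.cast_add, Nat.cast_one, map_add, map_one]
    linear_combination ((n : ℤ[X]) + 1) * truncLog p ^ n * h3 -
      ((n : ℤ[X]) + 1) * (X * (X - 1) ^ (p - 1)) * h2
  rw [e, residueSum_C_mul, map_add, map_sub, residueSum_zero_mul, zero_sub] at h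
  have hpn : ¬ (p : ℤ) ∣ ((n + 1 : ℕ) : ℤ) := by
    rw [Int.natCast_dvd_natCast]
    exact Nat.not_dvd_of_pos_of_lt (by omega) (by omega)
  have h4 := ((Nat.prime_iff_prime_int.1 hp).dvd_or_dvd h).resolve_left hpn
  exact (dvd_add_left (dvd_neg.2 (dvd_residueSum_of_X_sub_one_pow hp 0 _))).1 h4

lemma residueSum_eq_coeff_zero {p : ℕ} (hp : 0 < p) (f : ℤ[X]) (hf : f.natDegree < p) :
    residueSum p 0 0 f = f.coeff 0 := by
  conv_lhs => rw [f.as_sum_range' p hf]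
  rw [map_sum, Finset.sum_eq_single_of_mem 0 (Finset.mem_range.2 hp)]
  · rw [residueSum_monomial, residueWeight]
    simp
  · intro k hk hk0
    rw [residueSum_monomial, residueWeight, if_neg, zero_mul]
    intro h
    rw [sub_zero] at h
    have h' : p ∣ k := by exact_mod_cast Int.dvd_of_emod_eq_zero h
    exact absurd (Nat.le_of_dvd (by omega) h') (by have := Finset.mem_range.1 hk; omega)

lemma dvd_residueSum_truncLog_pow_sub_one {p : ℕ} (hp : p.Prime) :
    (p : ℤ) ∣ residueSum p 0 0 (truncLog p ^ (p - 1)) - 1 := by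
  obtain ⟨u, hu⟩ := logQuot_eq_one_add hp
  obtain ⟨v, hv⟩ : (X - 1 : ℤ[X]) ∣ logQuot p ^ (p - 1) - 1 := by
    have := sub_one_dvd_pow_sub_one (logQuot p) (p - 1)
    exact (Dvd.intro u (by rw [hu]; ring)).trans this
  have e : truncLog p ^ (p - 1) = (X - 1) ^ (p - 1) + (X - 1) ^ p * v := by
    have h1 : (X - 1 : ℤ[X]) ^ p = (X - 1) * (X - 1) ^ (p - 1) := by
      rw [← pow_succ', Nat.sub_add_cancel hp.one_le]
    rw [truncLog, mul_pow, h1]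
    linear_combination (X - 1) ^ (p - 1) * hv
  have hd : ((X - 1 : ℤ[X]) ^ (p - 1)).natDegree < p := by
    have h : ((X - C 1 : ℤ[X]) ^ (p - 1)).natDegree = p - 1 := by
      rw [natDegree_pow, natDegree_X_sub_C, mul_one]
    rw [C_1] at h
    have := hp.pos
    omega
  have hc : ((X - 1 : ℤ[X]) ^ (p - 1)).coeff 0 = (-1) ^ (p - 1) := by
    rw [coeff_zero_eq_eval_zero]; simp
  have hm : (p : ℤ) ∣ (-1) ^ (p - 1) - 1 :=
    (Int.ModEq.pow_card_sub_one_eq_one hp (n := -1)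
      (isCoprime_one_left.neg_left)).symm.dvd
  rw [e, map_add, residueSum_eq_coeff_zero hp.pos _ hd, hc, add_sub_right_comm]
  exact dvd_add hm (dvd_residueSum_of_X_sub_one_pow hp 0 v)

/-- The leading term of the residue sum of `truncLog p ^ n`. -/
def leadingTerm (p n l : ℕ) : ℤ :=
  if (p - 1) ∣ n - l then
    (((n - l) / (p - 1) - 1).choose l : ℤ) * (-(p : ℤ)) ^ ((n - l) / (p - 1) - 1 - l)
  else 0

lemma leadingTerm_of_mul_eq {p n l N : ℕ} (hp : 2 ≤ p) (h : n = l + (N + 1) * (p - 1)) :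
    leadingTerm p n l = (N.choose l : ℤ) * (-(p : ℤ)) ^ (N - l) := by
  have h1 : n - l = (N + 1) * (p - 1) := by omega
  rw [leadingTerm, h1, if_pos (Dvd.intro_left _ rfl), Nat.mul_div_cancel _ (by omega),
    Nat.add_sub_cancel]

lemma leadingTerm_zero_add {p n : ℕ} (hp : 2 ≤ p) :
    leadingTerm p (n + p) 0 = -p * leadingTerm p (n + 1) 0 := by
  by_cases h : (p - 1) ∣ n + 1
  · obtain ⟨N, hN⟩ := h
    obtain ⟨M, rfl⟩ : ∃ M, N = M + 1 :=
      Nat.exists_eq_succ_of_ne_zero (by rintro rfl; simp at hN)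
    rw [mul_comm] at hN
    rw [leadingTerm_of_mul_eq (N := M) (n := n + 1) hp (by omega),
      leadingTerm_of_mul_eq (N := M + 1) hp (by rw [add_mul (M + 1) 1, ← hN]; omega)]
    simp [pow_succ']
  · have h' : ¬ (p - 1) ∣ n + p := by
      rwa [show n + p = n + 1 + (p - 1) by omega, Nat.dvd_add_self_right]
    simp [leadingTerm, h, h']

lemma leadingTerm_succ_add {p n l : ℕ} (hp : 2 ≤ p) (h : (l + 1) * p + 1 ≤ n + p) :
    leadingTerm p (n + p) (l + 1) = leadingTerm p n l + -p * leadingTerm p (n + 1) (l + 1) := by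
  have hln : l < n := by
    have := Nat.le_mul_of_pos_right l (by omega : 0 < p)
    rw [add_mul] at h
    omega
  by_cases hd : (p - 1) ∣ n - l
  · obtain ⟨N, hN⟩ := hd
    obtain ⟨M, rfl⟩ : ∃ M, N = M + 1 :=
      Nat.exists_eq_succ_of_ne_zero (by rintro rfl; simp at hN; omega)
    have hlM : l ≤ M := by
      by_contra hlt
      have : (p - 1) * (M + 1) ≤ (p - 1) * l := Nat.mul_le_mul_left _ (by omega)
      have h2 : l * p = (p - 1) * l + l := by
        obtain ⟨k, rfl⟩ := Nat.exists_eq_add_of_le' hp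
        simp; ring
      rw [add_mul] at h
      omega
    have hn : n = l + (M + 1) * (p - 1) := by rw [mul_comm]; omega
    rw [leadingTerm_of_mul_eq (N := M) hp hn,
      leadingTerm_of_mul_eq (N := M) (n := n + 1) hp (by omega),
      leadingTerm_of_mul_eq (N := M + 1) (n := n + p) hp (by rw [add_mul _ 1]; omega),
      Nat.choose_succ_succ, Nat.add_sub_add_right]
    rcases hlM.eq_or_lt with rfl | hlt
    · simp
    · rw [show M - l = (M - (l + 1)) + 1 by omega]
      push_cast
      ring
  · have h1 : n + p - (l + 1) = n - l + (p - 1) := by omega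
    have h2 : n + 1 - (l + 1) = n - l := by omega
    simp [leadingTerm, h1, h2, hd]

lemma residueSum_truncLog_pow {p : ℕ} (hp : p.Prime) (n l c : ℕ)
    (h : l * p + 1 + c * (p - 1) ≤ n) :
    (p : ℤ) ^ (c + 1) ∣ residueSum p 0 l (truncLog p ^ n) - leadingTerm p n l := by
  have hp2 := hp.two_le
  induction n using Nat.strong_induction_on generalizing l c with
  | _ n ih =>
    rcases lt_or_ge n p with hn | hn
    · have hl : l = 0 := by
        by_contra h0
        have := Nat.le_mul_of_pos_left p (Nat.pos_of_ne_zero h0)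
        omega
      have hc : c = 0 := by
        by_contra h0
        have := Nat.le_mul_of_pos_left (p - 1) (Nat.pos_of_ne_zero h0)
        omega
      subst hl hc
      rw [zero_add, pow_one]
      rcases eq_or_ne n (p - 1) with rfl | hne
      · rw [leadingTerm_of_mul_eq (N := 0) hp2 (by omega)]
        simpa using dvd_residueSum_truncLog_pow_sub_one hp
      · have h' : ¬ (p - 1) ∣ n - 0 := Nat.not_dvd_of_pos_of_lt (by omega) (by omega)
        rw [leadingTerm, if_neg h', sub_zero]
        exact dvd_residueSum_truncLog_pow hp (by omega) (by omega)
    · obtain ⟨k, rfl⟩ := Nat.exists_eq_add_of_le' hn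
      obtain ⟨a, b, hab⟩ := truncLog_pow_prime hp
      have e : truncLog p ^ (k + p) = (X ^ p - 1) * truncLog p ^ k -
          C (p : ℤ) * truncLog p ^ (k + 1) +
          (C (p : ℤ) ^ 0 * (X - 1) ^ (k + 2 * p) * (logQuot p ^ k * a) +
            C (p : ℤ) ^ 1 * (X - 1) ^ (k + p + 1) * (logQuot p ^ k * b)) := by
        have hk : truncLog p ^ k = (X - 1) ^ k * logQuot p ^ k := by rw [truncLog, mul_pow]
        rw [pow_add _ k p, hab]
        linear_combination ((X - 1) ^ (2 * p) * a + C (p : ℤ) * (X - 1) ^ (p + 1) * b) * hk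
      have hrem := (fleckIdeal p (k + p + (p - 1))).add_mem
        (C_pow_mul_X_sub_one_pow_mul_mem hp (i := k + 2 * p) (e := 0) (by omega)
          (logQuot p ^ k * a))
        (C_pow_mul_X_sub_one_pow_mul_mem hp (i := k + p + 1) (e := 1) (by omega)
          (logQuot p ^ k * b)) 0 l (c + 1) (by rw [add_mul]; omega)
      have hsecond : (p : ℤ) ^ (c + 1) ∣
          p * residueSum p 0 l (truncLog p ^ (k + 1)) - p * leadingTerm p (k + 1) l := by
        rw [← mul_sub, pow_succ']
        refine mul_dvd_mul_left _ ?_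
        cases c with
        | zero => simp
        | succ c =>
          refine ih (k + 1) (by omega) l c ?_
          rw [add_mul] at h
          omega
      rw [e, map_add, map_sub, residueSum_C_mul]
      cases l with
      | zero =>
        rw [residueSum_zero_mul, leadingTerm_zero_add hp2]
        obtain ⟨x, hx⟩ := hrem
        obtain ⟨y, hy⟩ := hsecond
        exact ⟨x - y, by linear_combination hx - hy⟩
      | succ l =>
        have hfirst := ih k (by omega) l c (by rw [add_mul] at h; omega)
        rw [residueSum_succ_mul p hp.pos, leadingTerm_succ_add hp2 (by omega)]
        obtain ⟨x, hx⟩ := hrem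
        obtain ⟨y, hy⟩ := hsecond
        obtain ⟨z, hz⟩ := hfirst
        exact ⟨x - y + z, by linear_combination hx - hy + hz⟩

/-- `x` is `p`-integral and reduces to `y` modulo `p`. -/
def ReducesTo (p : ℕ) (x : ℚ) (y : ZMod p) : Prop :=
  ∃ a b : ℤ, (b : ZMod p) ≠ 0 ∧ x = a / b ∧ y * b = a

section ReducesTo

variable {p : ℕ} [Fact p.Prime] {x x' : ℚ} {y y' : ZMod p}

lemma intCast_ne_zero_of_zmod {b : ℤ} (hb : (b : ZMod p) ≠ 0) : (b : ℚ) ≠ 0 := by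
  rintro h
  exact hb (by rw [Int.cast_eq_zero.1 h, Int.cast_zero])

lemma ReducesTo.add (h : ReducesTo p x y) (h' : ReducesTo p x' y') :
    ReducesTo p (x + x') (y + y') := by
  obtain ⟨a, b, hb, rfl, hy⟩ := h
  obtain ⟨a', b', hb', rfl, hy'⟩ := h'
  have h1 := intCast_ne_zero_of_zmod hb
  have h2 := intCast_ne_zero_of_zmod hb'
  refine ⟨a * b' + b * a', b * b', by push_cast; exact mul_ne_zero hb hb', ?_, ?_⟩
  · push_cast
    rw [div_add_div _ _ h1 h2]
  · push_cast
    rw [← hy, ← hy']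
    ring

lemma ReducesTo.mul (h : ReducesTo p x y) (h' : ReducesTo p x' y') :
    ReducesTo p (x * x') (y * y') := by
  obtain ⟨a, b, hb, rfl, hy⟩ := h
  obtain ⟨a', b', hb', rfl, hy'⟩ := h'
  refine ⟨a * a', b * b', by push_cast; exact mul_ne_zero hb hb', ?_, ?_⟩
  · push_cast
    rw [div_mul_div_comm]
  · push_cast
    rw [← hy, ← hy']
    ring

variable (p) in
lemma ReducesTo.intCast (a : ℤ) : ReducesTo p (a : ℚ) (a : ZMod p) :=
  ⟨a, 1, by simp, by simp, by simp⟩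

variable (p) in
lemma ReducesTo.natCast (a : ℕ) : ReducesTo p (a : ℚ) (a : ZMod p) := by
  simpa using ReducesTo.intCast p (a : ℤ)

variable (p) in
lemma ReducesTo.inv_natCast {a : ℕ} (h : (a : ZMod p) ≠ 0) :
    ReducesTo p ((a : ℚ)⁻¹) ((a : ZMod p)⁻¹) :=
  ⟨1, a, by simpa using h, by simp, by simp [h]⟩

lemma ReducesTo.sum {ι : Type*} (s : Finset ι) (f : ι → ℚ) (g : ι → ZMod p)
    (h : ∀ i ∈ s, ReducesTo p (f i) (g i)) : ReducesTo p (∑ i ∈ s, f i) (∑ i ∈ s, g i) := by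
  classical
  induction s using Finset.induction_on with
  | empty => simpa using ReducesTo.natCast p 0
  | insert a s ha ih =>
    rw [Finset.sum_insert ha, Finset.sum_insert ha]
    exact (h a (Finset.mem_insert_self a s)).add
      (ih fun i hi => h i (Finset.mem_insert_of_mem hi))

lemma ReducesTo.unique (h : ReducesTo p x y) (h' : ReducesTo p x y') : y = y' := by
  obtain ⟨a, b, hb, rfl, hy⟩ := h
  obtain ⟨a', b', hb', hx, hy'⟩ := h'
  rw [div_eq_div_iff (intCast_ne_zero_of_zmod hb) (intCast_ne_zero_of_zmod hb')] at hx
  have h1 : a * b' = a' * b := by exact_mod_cast hx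
  have h2 : (a : ZMod p) * b' = a' * b := by exact_mod_cast congrArg (Int.cast : ℤ → ZMod p) h1
  apply mul_right_cancel₀ (mul_ne_zero hb hb')
  linear_combination (b' : ZMod p) * hy - b * hy' + h2

lemma ReducesTo.modCong (h : ReducesTo p x y) (h' : ReducesTo p x' y) : modCong p 1 x x' := by
  obtain ⟨a, b, hb, rfl, hy⟩ := h
  obtain ⟨a', b', hb', rfl, hy'⟩ := h'
  have h1 := intCast_ne_zero_of_zmod hb
  have h2 := intCast_ne_zero_of_zmod hb'
  rw [_root_.modCong, or_iff_not_imp_left, ← sub_eq_zero]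
  have hdvd : (p : ℤ) ∣ a * b' - b * a' := by
    rw [← ZMod.intCast_zmod_eq_zero_iff_dvd]
    push_cast
    rw [← hy, ← hy']
    ring
  have hndvd : ¬ (p : ℤ) ∣ b * b' := by
    rw [← ZMod.intCast_zmod_eq_zero_iff_dvd]
    push_cast
    exact mul_ne_zero hb hb'
  have e : (a / b - a' / b' : ℚ) = ((a * b' - b * a' : ℤ) : ℚ) / ((b * b' : ℤ) : ℚ) := by
    push_cast
    rw [div_sub_div _ _ h1 h2]
  rw [e]
  intro hne
  have hn : a * b' - b * a' ≠ 0 := by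
    rintro h0
    rw [h0] at hne
    simp at hne
  have hd : ((b * b' : ℤ) : ℚ) ≠ 0 := by
    push_cast
    exact mul_ne_zero h1 h2
  rw [padicValRat.div (by exact_mod_cast hn) hd, padicValRat.of_int, padicValRat.of_int,
    padicValInt.eq_zero_of_not_dvd hndvd]
  have h3 := (padicValInt_dvd_iff (p := p) 1 (a * b' - b * a')).1 (by simpa using hdvd)
  have h4 := h3.resolve_left hn
  push_cast
  omega

end ReducesTo

lemma factorial_ne_zero_zmod {p : ℕ} [Fact p.Prime] {i : ℕ} (hi : i < p) :
    (i.factorial : ZMod p) ≠ 0 := by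
  rw [Ne, ZMod.natCast_eq_zero_iff, (Fact.out : p.Prime).dvd_factorial]
  omega

lemma exists_reducesTo_bernoulli {p : ℕ} [Fact p.Prime] (k : ℕ) (hk : k + 1 < p) :
    ∃ y : ZMod p, ReducesTo p (bernoulli k) y := by
  induction k using Nat.strong_induction_on with
  | _ k ih =>
    have h : ∀ j, ∃ y : ZMod p, j < k → ReducesTo p (bernoulli j) y := fun j => by
      by_cases hj : j < k
      · obtain ⟨y, hy⟩ := ih j hj (by omega)
        exact ⟨y, fun _ => hy⟩
      · exact ⟨0, fun h => absurd h hj⟩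
    choose y hy using h
    have hs := _root_.sum_bernoulli (k + 1)
    rw [Finset.sum_range_succ, Nat.choose_succ_self_right] at hs
    have hk0 : ((k + 1 : ℕ) : ℚ) ≠ 0 := by positivity
    have e : _root_.bernoulli k = ((k + 1 : ℕ) : ℚ)⁻¹ * ((if k + 1 = 1 then (1 : ℤ) else 0 : ℤ) +
        ((-1 : ℤ) : ℚ) * ∑ j ∈ range k, ((k + 1).choose j : ℚ) * _root_.bernoulli j) := by
      rw [eq_inv_mul_iff_mul_eq₀ hk0]
      push_cast at hs ⊢
      linear_combination hs
    have hkp : ((k + 1 : ℕ) : ZMod p) ≠ 0 := by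
      rw [Ne, ZMod.natCast_eq_zero_iff]
      exact Nat.not_dvd_of_pos_of_lt (by omega) hk
    rw [e]
    exact ⟨_, (ReducesTo.inv_natCast p hkp).mul ((ReducesTo.intCast p _).add
      ((ReducesTo.intCast p (-1)).mul (ReducesTo.sum _ _ _ fun j hj =>
        (ReducesTo.natCast p _).mul (hy j (Finset.mem_range.1 hj)))))⟩

lemma bernHigher_eq_coeff (m k : ℕ) :
    bernHigher m k = k.factorial * PowerSeries.coeff k (bernoulliPowerSeries ℚ ^ m) := by
  have h : bernoulliPowerSeries ℚ ^ m = ∏ _j : Fin m, bernoulliPowerSeries ℚ := by simp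
  rw [bernHigher, h, PowerSeries.coeff_prod]
  congr 1
  refine Finset.sum_bij' (fun i _ => Finsupp.equivFunOnFinite.symm i) (fun l _ => ⇑l) ?_ ?_ ?_ ?_ ?_
  · intro i hi
    simpa [Finset.Nat.mem_antidiagonalTuple] using hi
  · intro l hl
    simpa [Finset.Nat.mem_antidiagonalTuple] using hl
  · intro i _
    rfl
  · intro l _
    ext
    rfl
  · intro i _
    simp [bernoulliPowerSeries, PowerSeries.coeff_mk]

lemma bernHigherPoly_eq_coeff (m k q : ℕ) :
    bernHigherPoly m k (q : ℚ) = k.factorial *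
      PowerSeries.coeff k (bernoulliPowerSeries ℚ ^ m * PowerSeries.exp ℚ ^ q) := by
  rw [PowerSeries.coeff_mul, Finset.Nat.sum_antidiagonal_eq_sum_range_succ_mk, bernHigherPoly,
    Finset.mul_sum]
  refine Finset.sum_congr rfl fun j hj => ?_
  have hjk : j ≤ k := Nat.lt_succ_iff.1 (Finset.mem_range.1 hj)
  rw [bernHigher_eq_coeff, PowerSeries.exp_pow_eq_rescale_exp, PowerSeries.coeff_rescale,
    PowerSeries.coeff_exp, Nat.cast_choose ℚ hjk]
  have h1 : (j.factorial : ℚ) ≠ 0 := by positivity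
  have h2 : ((k - j).factorial : ℚ) ≠ 0 := by positivity
  simp
  field_simp

/-- The power series `(exp X - 1) / X`. -/
noncomputable def expQuot : PowerSeries ℚ := PowerSeries.mk fun i => ((i + 1).factorial : ℚ)⁻¹

lemma X_mul_expQuot : PowerSeries.X * expQuot = PowerSeries.exp ℚ - 1 := by
  ext (_ | i)
  · simp
  · rw [PowerSeries.coeff_succ_X_mul, map_sub, PowerSeries.coeff_exp, PowerSeries.coeff_one]
    simp [expQuot]

lemma bernoulliPowerSeries_pow_mul (m q : ℕ) :
    bernoulliPowerSeries ℚ ^ m * PowerSeries.exp ℚ ^ q * expQuot ^ m = PowerSeries.exp ℚ ^ q := by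
  apply mul_left_cancel₀ (pow_ne_zero m (PowerSeries.X_ne_zero (R := ℚ)))
  have h := bernoulliPowerSeries_mul_exp_sub_one ℚ
  rw [← X_mul_expQuot] at h
  calc _ = (bernoulliPowerSeries ℚ * (PowerSeries.X * expQuot)) ^ m * PowerSeries.exp ℚ ^ q := by
        ring
    _ = _ := by rw [h]

/-- Coefficientwise reduction modulo `p` of a power series, in degrees below `p - 1`. -/
def SeriesReducesTo (p : ℕ) (f : PowerSeries ℚ) (g : (ZMod p)[X]) : Prop :=
  ∀ i, i + 1 < p → ReducesTo p (PowerSeries.coeff i f) (g.coeff i)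

section SeriesReducesTo

variable {p : ℕ} [Fact p.Prime] {f f' : PowerSeries ℚ} {g g' : (ZMod p)[X]}

lemma SeriesReducesTo.mul (h : SeriesReducesTo p f g) (h' : SeriesReducesTo p f' g') :
    SeriesReducesTo p (f * f') (g * g') := by
  intro i hi
  rw [PowerSeries.coeff_mul, Polynomial.coeff_mul]
  refine ReducesTo.sum _ _ _ fun a ha => ?_
  have := Finset.HasAntidiagonal.mem_antidiagonal.1 ha
  exact (h _ (by omega)).mul (h' _ (by omega))

lemma SeriesReducesTo.pow (h : SeriesReducesTo p f g) (n : ℕ) :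
    SeriesReducesTo p (f ^ n) (g ^ n) := by
  induction n with
  | zero =>
    intro i _
    rw [pow_zero, pow_zero, PowerSeries.coeff_one, Polynomial.coeff_one]
    split_ifs
    · simpa using ReducesTo.natCast p 1
    · simpa using ReducesTo.natCast p 0
  | succ n ih =>
    rw [pow_succ, pow_succ]
    exact ih.mul h

lemma SeriesReducesTo.dvd_sub (h : SeriesReducesTo p f g) (h' : SeriesReducesTo p f g') :
    X ^ (p - 1) ∣ g - g' := by
  rw [X_pow_dvd_iff]
  intro i hi
  rw [coeff_sub, (h i (by omega)).unique (h' i (by omega)), sub_self]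

end SeriesReducesTo

/-- The exponential series modulo `p`, truncated before degree `p`. -/
noncomputable def truncExp (p : ℕ) [Fact p.Prime] : (ZMod p)[X] :=
  ∑ i ∈ range p, monomial i ((i.factorial : ZMod p)⁻¹)

/-- The polynomial `(truncExp p - 1) / X`. -/
noncomputable def truncExpQuot (p : ℕ) [Fact p.Prime] : (ZMod p)[X] :=
  ∑ i ∈ range (p - 1), monomial i (((i + 1).factorial : ZMod p)⁻¹)

lemma coeff_sum_range_monomial {R : Type*} [Semiring R] (n : ℕ) (b : ℕ → R) (j : ℕ) :
    (∑ i ∈ range n, monomial i (b i)).coeff j = if j < n then b j else 0 := by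
  rw [finsetSum_coeff]
  simp [coeff_monomial]

lemma X_mul_truncExpQuot (p : ℕ) [hp : Fact p.Prime] :
    X * truncExpQuot p = truncExp p - 1 := by
  obtain ⟨k, hk⟩ : ∃ k, p = k + 1 := ⟨p - 1, by have := hp.out.pos; omega⟩
  have h1 : truncExp p = ∑ i ∈ range (k + 1), monomial i ((i.factorial : ZMod p)⁻¹) := by
    rw [truncExp, ← hk]
  have h2 : p - 1 = k := by omega
  rw [h1, truncExpQuot, h2, Finset.sum_range_succ', Finset.mul_sum]
  simp [X_mul_monomial]

lemma seriesReducesTo_exp (p : ℕ) [Fact p.Prime] :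
    SeriesReducesTo p (PowerSeries.exp ℚ) (truncExp p) := by
  intro i hi
  rw [truncExp, coeff_sum_range_monomial, if_pos (by omega), PowerSeries.coeff_exp]
  simpa using ReducesTo.inv_natCast p (factorial_ne_zero_zmod (p := p) (i := i) (by omega))

lemma seriesReducesTo_expQuot (p : ℕ) [Fact p.Prime] :
    SeriesReducesTo p expQuot (truncExpQuot p) := by
  intro i hi
  rw [truncExpQuot, coeff_sum_range_monomial, if_pos (by omega), expQuot, PowerSeries.coeff_mk]
  exact ReducesTo.inv_natCast p (factorial_ne_zero_zmod hi)

lemma exists_reducesTo_bernHigher {p : ℕ} [Fact p.Prime] (m : ℕ) :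
    ∃ y : ℕ → ZMod p, ∀ k, k + 1 < p → ReducesTo p (bernHigher m k) (y k) := by
  have h : ∀ k, ∃ y : ZMod p, k + 1 < p → ReducesTo p (bernoulli k) y := fun k => by
    by_cases hk : k + 1 < p
    · obtain ⟨y, hy⟩ := exists_reducesTo_bernoulli k hk
      exact ⟨y, fun _ => hy⟩
    · exact ⟨0, fun h => absurd h hk⟩
  choose y hy using h
  have hs : SeriesReducesTo p (bernoulliPowerSeries ℚ)
      (∑ i ∈ range p, monomial i (y i * (i.factorial : ZMod p)⁻¹)) := by
    intro i hi
    rw [coeff_sum_range_monomial, if_pos (by omega), bernoulliPowerSeries, PowerSeries.coeff_mk]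
    exact (hy i hi).mul (ReducesTo.inv_natCast p (factorial_ne_zero_zmod (by omega)))
  refine ⟨fun k => (k.factorial : ZMod p) *
    ((∑ i ∈ range p, monomial i (y i * (i.factorial : ZMod p)⁻¹)) ^ m).coeff k, fun k hk => ?_⟩
  rw [bernHigher_eq_coeff]
  exact (ReducesTo.natCast p _).mul (hs.pow m k hk)

lemma reducesTo_bernHigherPoly {p : ℕ} [Fact p.Prime] {m : ℕ} {y : ℕ → ZMod p}
    (hy : ∀ k, k + 1 < p → ReducesTo p (bernHigher m k) (y k)) (k : ℕ) (hk : k + 1 < p) (t : ℤ) :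
    ReducesTo p (bernHigherPoly m k (t : ℚ))
      (∑ j ∈ range (k + 1), (k.choose j : ZMod p) * y j * (t : ZMod p) ^ (k - j)) := by
  refine ReducesTo.sum _ _ _ fun j hj => ?_
  have hj' := Finset.mem_range.1 hj
  refine ((ReducesTo.natCast p _).mul (hy j (by omega))).mul ?_
  exact_mod_cast ReducesTo.intCast p (t ^ (k - j))

lemma derivative_truncExp (p : ℕ) [hp : Fact p.Prime] : derivative (truncExp p) =
    truncExp p - monomial (p - 1) (((p - 1).factorial : ZMod p)⁻¹) := by
  have hp0 := hp.out.pos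
  ext j
  rw [coeff_derivative, coeff_sub, truncExp, coeff_sum_range_monomial, coeff_sum_range_monomial,
    coeff_monomial]
  rcases lt_trichotomy (j + 1) p with h | h | h
  · have h1 := factorial_ne_zero_zmod (p := p) (i := j + 1) h
    rw [if_pos h, if_pos (by omega), if_neg (by omega), sub_zero]
    rw [Nat.factorial_succ] at h1 ⊢
    push_cast at h1 ⊢
    rw [mul_inv_rev, mul_assoc, inv_mul_cancel₀ (left_ne_zero_of_mul h1), mul_one]
  · rw [if_neg (by omega), if_pos (by omega), if_pos (by omega), zero_mul,
      show p - 1 = j by omega, sub_self]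
  · rw [if_neg (by omega), if_neg (by omega), if_neg (by omega), zero_mul, sub_zero]

/-- The reduction of `truncLog p` modulo `p`. -/
noncomputable def truncLogMod (p : ℕ) : (ZMod p)[X] := (truncLog p).map (Int.castRingHom (ZMod p))

/-- The reduction of `logQuot p` modulo `p`. -/
noncomputable def logQuotMod (p : ℕ) : (ZMod p)[X] := (logQuot p).map (Int.castRingHom (ZMod p))

lemma truncLogMod_eq (p : ℕ) : truncLogMod p = (X - 1) * logQuotMod p := by
  simp [truncLogMod, truncLog, logQuotMod]

lemma X_mul_derivative_truncLogMod (p : ℕ) [hp : Fact p.Prime] :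
    X * derivative (truncLogMod p) = 1 + (X - 1) ^ (p - 1) * (X - 1 - X) := by
  have h := congrArg (Polynomial.map (Int.castRingHom (ZMod p)))
    (X_mul_derivative_truncLog hp.out)
  simp only [Polynomial.map_mul, map_X, Polynomial.map_sub, Polynomial.map_pow,
    Polynomial.map_one] at h
  have h1 : (X - 1 : (ZMod p)[X]) ^ (p - 1) * (X - 1) = X ^ p - 1 := by
    rw [← pow_succ, Nat.sub_add_cancel hp.out.one_le, sub_pow_char, one_pow]
  rw [truncLogMod, derivative_map, h]
  linear_combination -h1

lemma X_sub_one_pow_succ_dvd {p : ℕ} [Fact p.Prime] {d v : (ZMod p)[X]} {j : ℕ} (hj : j + 1 < p)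
    (hd : X * derivative d = d + (X - 1) ^ (p - 1) * v) (h : (X - 1) ^ (j + 1) ∣ d) :
    (X - 1) ^ (j + 2) ∣ d := by
  obtain ⟨u, rfl⟩ := h
  obtain ⟨i, hi⟩ : ∃ i, p - 1 = j + 1 + i := ⟨p - 1 - (j + 1), by omega⟩
  rw [pow_succ _ (j + 1)]
  refine mul_dvd_mul_left _ ?_
  rw [derivative_mul, derivative_pow_succ, derivative_sub, derivative_X, derivative_one, sub_zero,
    mul_one, hi, pow_add _ (j + 1) i, pow_succ _ j] at hd
  have hne : (X - 1 : (ZMod p)[X]) ^ j ≠ 0 :=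
    pow_ne_zero _ (by simpa using X_sub_C_ne_zero (1 : ZMod p))
  have hX : (X - 1 : (ZMod p)[X]) ∣ C ((j : ZMod p) + 1) * u := by
    refine ⟨u + (X - 1) ^ i * v - X * derivative u - C ((j : ZMod p) + 1) * u, ?_⟩
    apply mul_left_cancel₀ hne
    simp only [map_add, map_one] at hd ⊢
    linear_combination hd
  have hu : IsUnit (C ((j : ZMod p) + 1)) := by
    rw [isUnit_C, isUnit_iff_ne_zero]
    have : ((j + 1 : ℕ) : ZMod p) ≠ 0 := by
      rw [Ne, ZMod.natCast_eq_zero_iff]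
      exact Nat.not_dvd_of_pos_of_lt (by omega) hj
    exact_mod_cast this
  exact (hu.dvd_mul_left).1 hX

lemma X_sub_one_pow_dvd_truncExp_comp (p : ℕ) [hp : Fact p.Prime] :
    (X - 1) ^ p ∣ (truncExp p).comp (truncLogMod p) - X := by
  have hp2 := hp.out.two_le
  set d := (truncExp p).comp (truncLogMod p) - X with hd
  obtain ⟨v, hv⟩ : ∃ v, X * derivative d = d + (X - 1) ^ (p - 1) * v := by
    set c := ((p - 1).factorial : ZMod p)⁻¹ with hc
    set E := (truncExp p).comp (truncLogMod p) with hE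
    refine ⟨(E - C c * truncLogMod p ^ (p - 1)) * (X - 1 - X) - C c * logQuotMod p ^ (p - 1), ?_⟩
    have h1 : derivative E = derivative (truncLogMod p) *
        (E - C c * truncLogMod p ^ (p - 1)) := by
      rw [hE, derivative_comp, derivative_truncExp, sub_comp, monomial_comp]
    have h2 := X_mul_derivative_truncLogMod p
    have h3 : truncLogMod p ^ (p - 1) = (X - 1) ^ (p - 1) * logQuotMod p ^ (p - 1) := by
      rw [truncLogMod_eq, mul_pow]
    rw [hd, derivative_sub, derivative_X, h1]
    linear_combination (E - C c * truncLogMod p ^ (p - 1)) * h2 - C c * h3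
  have key : ∀ j, j < p → (X - 1) ^ (j + 1) ∣ d := by
    intro j hj
    induction j with
    | zero =>
      have h0 : (X - C (1 : ZMod p)) ∣ d := by
        rw [dvd_iff_isRoot, IsRoot.def, hd, eval_sub, eval_comp, truncLogMod_eq]
        have : (truncExp p).eval 0 = 1 := by
          rw [← coeff_zero_eq_eval_zero, truncExp, coeff_sum_range_monomial, if_pos hj]
          simp
        simp [this]
      simpa using h0
    | succ j ih => exact X_sub_one_pow_succ_dvd hj hv (ih (by omega))
  have := key (p - 1) (by omega)
  rwa [Nat.sub_add_cancel (by omega)] at this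

lemma logQuotMod_eq_one_add (p : ℕ) [hp : Fact p.Prime] :
    ∃ u, logQuotMod p = 1 + (X - 1) * u := by
  obtain ⟨u, hu⟩ := logQuot_eq_one_add hp.out
  exact ⟨u.map (Int.castRingHom (ZMod p)), by simp [logQuotMod, hu]⟩

lemma X_sub_one_pow_dvd_logQuotMod_pow (p : ℕ) [hp : Fact p.Prime] {k : ℕ} (hk : p ∣ k) :
    (X - 1) ^ (p - 1) ∣ logQuotMod p ^ k - 1 := by
  obtain ⟨c, rfl⟩ := hk
  obtain ⟨u, hu⟩ := logQuotMod_eq_one_add p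
  have h : (X - 1) ^ (p - 1) ∣ logQuotMod p ^ p - 1 := by
    rw [hu, add_pow_char, one_pow, add_sub_cancel_left, mul_pow]
    exact (pow_dvd_pow _ (Nat.sub_le p 1)).mul_right _
  rw [pow_mul]
  exact h.trans (sub_one_dvd_pow_sub_one _ _)

lemma X_sub_one_pow_dvd_logQuotMod_mul (p : ℕ) [hp : Fact p.Prime] :
    (X - 1) ^ (p - 1) ∣ logQuotMod p * (truncExpQuot p).comp (truncLogMod p) - 1 := by
  have hne : (X - 1 : (ZMod p)[X]) ≠ 0 := by simpa using X_sub_C_ne_zero (1 : ZMod p)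
  have h := X_sub_one_pow_dvd_truncExp_comp p
  have h2 := congrArg (fun f => f.comp (truncLogMod p)) (X_mul_truncExpQuot p)
  simp only [mul_comp, X_comp, sub_comp, one_comp] at h2
  rw [← mul_dvd_mul_iff_left hne, ← pow_succ', Nat.sub_add_cancel hp.out.one_le]
  convert h using 1
  linear_combination h2 -
    (truncExpQuot p).comp (truncLogMod p) * truncLogMod_eq p

lemma logQuotMod_pow_mul_comp {p : ℕ} [hp : Fact p.Prime] {m n q : ℕ} (hmn : p ∣ m + n)
    {g : (ZMod p)[X]} (hg : X ^ (p - 1) ∣ g * truncExpQuot p ^ m - truncExp p ^ q) :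
    (X - 1) ^ (p - 1) ∣ logQuotMod p ^ n * g.comp (truncLogMod p) - X ^ q := by
  set I : Ideal (ZMod p)[X] := Ideal.span {(X - 1) ^ (p - 1)} with hI
  have conv : ∀ a b : (ZMod p)[X], (X - 1) ^ (p - 1) ∣ a - b ↔
      Ideal.Quotient.mk I a = Ideal.Quotient.mk I b := fun a b => by
    rw [Ideal.Quotient.eq, hI, Ideal.mem_span_singleton]
  have h1 := (conv _ _).1 (X_sub_one_pow_dvd_logQuotMod_pow p hmn)
  have h2 := (conv _ _).1 (X_sub_one_pow_dvd_logQuotMod_mul p)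
  have h3 := (conv _ _).1
    ((pow_dvd_pow (X - 1) (Nat.sub_le p 1)).trans (X_sub_one_pow_dvd_truncExp_comp p))
  have h4 : (X - 1) ^ (p - 1) ∣ g.comp (truncLogMod p) *
      (truncExpQuot p).comp (truncLogMod p) ^ m - (truncExp p).comp (truncLogMod p) ^ q := by
    obtain ⟨v, hv⟩ := hg
    have := congrArg (fun f => f.comp (truncLogMod p)) hv
    simp only [mul_comp, X_comp, sub_comp, pow_comp] at this
    rw [this, truncLogMod_eq, mul_pow, mul_assoc]
    exact dvd_mul_right _ _
  rw [conv] at h4 ⊢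
  simp only [map_mul, map_pow, map_one] at h1 h2 h3 h4 ⊢
  rw [h3] at h4
  rw [← h4]
  set ζ := Ideal.Quotient.mk I (logQuotMod p)
  set U := Ideal.Quotient.mk I ((truncExpQuot p).comp (truncLogMod p))
  set G := Ideal.Quotient.mk I (g.comp (truncLogMod p))
  calc ζ ^ n * G = ζ ^ n * G * (ζ * U) ^ m := by rw [h2, one_pow, mul_one]
    _ = ζ ^ (m + n) * (G * U ^ m) := by ring
    _ = G * U ^ m := by rw [h1, one_mul]

lemma exists_eq_of_map_dvd {p : ℕ} [Fact p.Prime] {f g : ℤ[X]}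
    (h : g.map (Int.castRingHom (ZMod p)) ∣ f.map (Int.castRingHom (ZMod p))) :
    ∃ a b : ℤ[X], f = g * a + C (p : ℤ) * b := by
  obtain ⟨u, hu⟩ := h
  obtain ⟨a, rfl⟩ := Polynomial.map_surjective (Int.castRingHom (ZMod p))
    (ZMod.ringHom_surjective _) u
  have h0 : (C (p : ℤ)) ∣ f - g * a := by
    rw [C_dvd_iff_dvd_coeff]
    intro i
    rw [← ZMod.intCast_zmod_eq_zero_iff_dvd]
    have : ((f - g * a).map (Int.castRingHom (ZMod p))).coeff i = 0 := by
      rw [Polynomial.map_sub, Polynomial.map_mul, hu, sub_self, coeff_zero]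
    simpa only [coeff_map, eq_intCast] using this
  obtain ⟨b, hb⟩ := h0
  exact ⟨a, b, by linear_combination hb⟩

lemma exists_truncLog_expansion {p : ℕ} [hp : Fact p.Prime] {m n q : ℕ} {t : ℤ}
    (hmn : p ∣ m + n) (hq : (q : ZMod p) = t) : ∃ b : ℕ → ℤ,
    (∀ k, k + 1 < p →
      ReducesTo p (bernHigherPoly m k (t : ℚ)) ((k.factorial : ZMod p) * (b k : ZMod p))) ∧
    ∃ f g : ℤ[X], X ^ q * (X - 1) ^ n = (∑ k ∈ range (p - 1), C (b k) * truncLog p ^ (n + k)) +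
      ((X - 1) ^ (n + (p - 1)) * f + C (p : ℤ) * (X - 1) ^ n * g) := by
  obtain ⟨y, hy⟩ := exists_reducesTo_bernHigher (p := p) m
  set β : ℕ → ZMod p := fun k => (k.factorial : ZMod p)⁻¹ *
    ∑ j ∈ range (k + 1), (k.choose j : ZMod p) * y j * (t : ZMod p) ^ (k - j) with hβ
  choose b hb using fun k => ZMod.intCast_surjective (β k)
  have hfac : ∀ k, k + 1 < p → (k.factorial : ZMod p) * (b k : ZMod p) =
      ∑ j ∈ range (k + 1), (k.choose j : ZMod p) * y j * (t : ZMod p) ^ (k - j) := by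
    intro k hk
    rw [hb, hβ, mul_inv_cancel_left₀ (factorial_ne_zero_zmod (by omega))]
  refine ⟨b, fun k hk => ?_, ?_⟩
  · rw [hfac k hk]
    exact reducesTo_bernHigherPoly hy k hk t
  · set P : ℤ[X] := ∑ k ∈ range (p - 1), monomial k (b k) with hP
    have hred : SeriesReducesTo p (bernoulliPowerSeries ℚ ^ m * PowerSeries.exp ℚ ^ q)
        (P.map (Int.castRingHom (ZMod p))) := by
      intro k hk
      have h0 : (k.factorial : ℚ) ≠ 0 := by positivity
      have hk0 := factorial_ne_zero_zmod (p := p) (i := k) (by omega)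
      have h1 := reducesTo_bernHigherPoly hy k hk (q : ℤ)
      have h2 := (ReducesTo.inv_natCast p hk0).mul h1
      rw [Int.cast_natCast, Int.cast_natCast, hq, bernHigherPoly_eq_coeff,
        inv_mul_cancel_left₀ h0] at h2
      rw [coeff_map, hP, coeff_sum_range_monomial, if_pos (by omega), eq_intCast, hb]
      exact h2
    have hdvd := (hred.mul ((seriesReducesTo_expQuot p).pow m)).dvd_sub
      (by rw [bernoulliPowerSeries_pow_mul]; exact (seriesReducesTo_exp p).pow q)
    have h3 := logQuotMod_pow_mul_comp (n := n) hmn hdvd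
    obtain ⟨f, g, hfg⟩ := exists_eq_of_map_dvd (p := p)
      (f := logQuot p ^ n * P.comp (truncLog p) - X ^ q) (g := (X - 1) ^ (p - 1)) (by
        simpa [Polynomial.map_comp, logQuotMod, truncLogMod] using h3)
    refine ⟨-f, -g, ?_⟩
    have h4 : ∑ k ∈ range (p - 1), C (b k) * truncLog p ^ (n + k) =
        (X - 1) ^ n * (logQuot p ^ n * P.comp (truncLog p)) := by
      rw [hP, Polynomial.sum_comp, ← mul_assoc, ← mul_pow, ← truncLog, Finset.mul_sum]
      refine Finset.sum_congr rfl fun k _ => ?_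
      rw [monomial_comp]
      ring
    rw [h4, pow_add]
    linear_combination -(X - 1) ^ n * hfg

lemma dvd_residueSum_of_mem {p n l c : ℕ} {f : ℤ[X]} (hf : f ∈ fleckIdeal p (n + (p - 1)))
    (r : ℤ) (h : l * p + 1 + c * (p - 1) ≤ n) : (p : ℤ) ^ (c + 1) ∣ residueSum p r l f :=
  hf r l (c + 1) (by rw [add_mul, one_mul]; omega)

lemma X_pow_sub_one_mul_mem {p : ℕ} (hp : p.Prime) (n j : ℕ) :
    (X ^ (p * j) - 1) * (X - 1) ^ n ∈ fleckIdeal p (n + (p - 1)) := by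
  obtain ⟨u, hu⟩ : (X ^ p - 1 : ℤ[X]) ∣ X ^ (p * j) - 1 := by
    rw [pow_mul]
    exact sub_one_dvd_pow_sub_one _ _
  have e : (X ^ (p * j) - 1) * (X - 1 : ℤ[X]) ^ n =
      C (p : ℤ) ^ 0 * (X - 1) ^ (n + p) * u +
        C (p : ℤ) ^ 1 * (X - 1) ^ (n + 1) * (logQuot p * u) := by
    rw [hu, X_pow_sub_one_eq hp, truncLog]
    ring
  rw [e]
  exact add_mem (C_pow_mul_X_sub_one_pow_mul_mem hp (by omega) _)
    (C_pow_mul_X_sub_one_pow_mul_mem hp (by omega) _)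

lemma exists_residueSum_X_sub_one_pow {p : ℕ} [hp : Fact p.Prime] {m n l k N : ℕ} (r : ℤ)
    (hmn : p ∣ m + n) (hk : k < p - 1) (hN : n + k = l + (N + 1) * (p - 1))
    (hln : l * p + 1 ≤ n) : ∃ b : ℤ,
    ReducesTo p (bernHigherPoly m k (-r : ℚ)) ((k.factorial : ZMod p) * (b : ZMod p)) ∧
    (p : ℤ) ^ (N - l + 1) ∣ residueSum p r l ((X - 1) ^ n) -
      b * ((N.choose l : ℤ) * (-(p : ℤ)) ^ (N - l)) := by
  have hp2 := hp.out.two_le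
  obtain ⟨d, hd⟩ : ∃ d, p = d + 1 := ⟨p - 1, by omega⟩
  have hd' : p - 1 = d := by omega
  have hlN : l ≤ N := by
    by_contra hcon
    have := Nat.mul_le_mul_right d (show N + 1 ≤ l by omega)
    rw [hd'] at hN
    rw [hd, mul_add] at hln
    omega
  obtain ⟨c, rfl⟩ := Nat.exists_eq_add_of_le hlN
  rw [Nat.add_sub_cancel_left]
  have hc : l * p + 1 + c * (p - 1) ≤ n := by
    rw [hd'] at hN hk ⊢
    rw [hd]
    nlinarith
  set j := r.natAbs with hj
  obtain ⟨q, hq⟩ : ∃ q : ℕ, (q : ℤ) = ((p * j : ℕ) : ℤ) - r := by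
    refine ⟨(((p * j : ℕ) : ℤ) - r).toNat, Int.toNat_of_nonneg ?_⟩
    have h1 : r ≤ j := by rw [hj]; exact Int.le_natAbs
    have h2 : j ≤ p * j := Nat.le_mul_of_pos_left _ (by omega)
    omega
  have hqz : (q : ZMod p) = ((-r : ℤ) : ZMod p) := by
    have := congrArg (Int.cast : ℤ → ZMod p) hq
    push_cast at this
    simpa using this
  obtain ⟨b, hb, f, g, hfg⟩ := exists_truncLog_expansion hmn hqz
  refine ⟨b k, by simpa using hb k (by omega), ?_⟩
  have h1 := dvd_residueSum_of_mem (X_pow_sub_one_mul_mem hp.out n j) r hc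
  rw [sub_mul, one_mul, map_sub, residueSum_X_pow_mul,
    show r - ((p * j : ℕ) : ℤ) = 0 - (q : ℤ) by rw [hq]; ring, ← residueSum_X_pow_mul, hfg,
    map_add] at h1
  have h2 : (p : ℤ) ^ (c + 1) ∣ residueSum p 0 l
      ((X - 1) ^ (n + (p - 1)) * f + C (p : ℤ) * (X - 1) ^ n * g) := by
    refine dvd_residueSum_of_mem (add_mem ?_ ?_) 0 hc
    · simpa using C_pow_mul_X_sub_one_pow_mul_mem hp.out (e := 0) (by omega) f
    · simpa using C_pow_mul_X_sub_one_pow_mul_mem hp.out (e := 1) (by omega) g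
  have h3 : (p : ℤ) ^ (c + 1) ∣ residueSum p 0 l
      (∑ i ∈ range (p - 1), C (b i) * truncLog p ^ (n + i)) -
        ∑ i ∈ range (p - 1), b i * leadingTerm p (n + i) l := by
    rw [map_sum, ← Finset.sum_sub_distrib]
    refine Finset.dvd_sum fun i _ => ?_
    rw [residueSum_C_mul, ← mul_sub]
    exact (residueSum_truncLog_pow hp.out (n + i) l c (by omega)).mul_left _
  have h4 : ∑ i ∈ range (p - 1), b i * leadingTerm p (n + i) l =
      b k * (((l + c).choose l : ℤ) * (-(p : ℤ)) ^ c) := by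
    rw [Finset.sum_eq_single_of_mem k (Finset.mem_range.2 hk),
      leadingTerm_of_mul_eq hp2 hN, Nat.add_sub_cancel_left]
    intro i hi hik
    rw [leadingTerm, if_neg, mul_zero]
    intro hdvd
    have hlt : l ≤ n := (Nat.le_mul_of_pos_right l (by omega : 0 < p)).trans (by omega)
    have hdvd2 : (p - 1) ∣ n + k - l := by
      rw [hN, Nat.add_sub_cancel_left]
      exact Nat.dvd_mul_left _ _
    have hmod : n - l + i ≡ n - l + k [MOD (p - 1)] := by
      rw [show n - l + i = n + i - l by omega, show n - l + k = n + k - l by omega]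
      exact ((Nat.modEq_zero_iff_dvd.2 hdvd).trans (Nat.modEq_zero_iff_dvd.2 hdvd2).symm)
    exact hik (Nat.ModEq.eq_of_lt_of_lt (Nat.ModEq.add_left_cancel' _ hmod)
      (Finset.mem_range.1 hi) hk)
  rw [h4] at h3
  obtain ⟨u, hu⟩ := dvd_sub (dvd_add h3 h2) h1
  exact ⟨u, by linear_combination hu⟩

/-- The linear map extracting the exponents congruent to `t` modulo `q`, where `X ^ (q * i + t)`
is sent to `X ^ i`. -/
noncomputable def residueSection (q t : ℕ) : ℤ[X] →ₗ[ℤ] ℤ[X] :=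
  Polynomial.lsum fun k => if k % q = t then monomial (k / q) else 0

lemma residueSection_monomial (q t k : ℕ) (c : ℤ) :
    residueSection q t (monomial k c) = if k % q = t then monomial (k / q) c else 0 := by
  rw [residueSection, Polynomial.lsum_apply, Polynomial.sum_monomial_index]
  · split_ifs <;> simp
  · exact map_zero _

lemma residueSection_expand_mul {q : ℕ} (hq : 0 < q) (t : ℕ) (g f : ℤ[X]) :
    residueSection q t (expand ℤ q g * f) = g * residueSection q t f := by
  induction g using Polynomial.induction_on' with
  | add g₁ g₂ h₁ h₂ => rw [map_add, add_mul, map_add, h₁, h₂, add_mul]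
  | monomial i b =>
    induction f using Polynomial.induction_on' with
    | add f₁ f₂ h₁ h₂ => rw [mul_add, map_add, map_add, h₁, h₂, mul_add]
    | monomial k c =>
      rw [expand_monomial, monomial_mul_monomial, residueSection_monomial,
        residueSection_monomial, add_comm (i * q) k, Nat.add_mul_mod_self_right,
        Nat.add_mul_div_right _ _ hq]
      split_ifs
      · rw [monomial_mul_monomial, add_comm]
      · rw [mul_zero]

lemma residueSection_C_mul (q t : ℕ) (c : ℤ) (f : ℤ[X]) :
    residueSection q t (C c * f) = C c * residueSection q t f := by
  rw [← smul_eq_C_mul, map_smul, smul_eq_C_mul]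

lemma residueSum_mul_eq (p : ℕ) {q t : ℕ} (ht : t < q) (r : ℤ) (l : ℕ) (f : ℤ[X]) :
    residueSum (p * q) (q * r + t) l f = residueSum p r l (residueSection q t f) := by
  induction f using Polynomial.induction_on' with
  | add f₁ f₂ h₁ h₂ => rw [map_add, map_add, map_add, h₁, h₂]
  | monomial k c =>
    have hq : (0 : ℤ) < q := by omega
    have hk : (k : ℤ) = q * ((k / q : ℕ) : ℤ) + ((k % q : ℕ) : ℤ) := by
      exact_mod_cast (Nat.div_add_mod k q).symm
    rw [residueSection_monomial, residueSum_monomial]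
    split_ifs with h
    · rw [residueSum_monomial, residueWeight, residueWeight]
      have e : (k : ℤ) - (q * r + t) = q * (((k / q : ℕ) : ℤ) - r) := by
        rw [h] at hk
        linear_combination hk
      rw [e, Nat.cast_mul, mul_comm (p : ℤ), Int.mul_emod_mul_of_pos _ _ hq,
        Int.mul_ediv_mul_of_pos _ _ hq]
      simp only [mul_eq_zero, hq.ne', false_or]
    · rw [residueWeight, if_neg, zero_mul, map_zero]
      intro h0
      have h1 : (q : ℤ) ∣ (k : ℤ) - (q * r + t) :=
        (Dvd.intro_left (p : ℤ) (by push_cast; rfl)).trans (Int.dvd_of_emod_eq_zero h0)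
      have h2 : (q : ℤ) ∣ (k : ℤ) - t := by
        have := dvd_add h1 (dvd_mul_right (q : ℤ) r)
        rwa [show (k : ℤ) - (q * r + t) + q * r = k - t by ring] at this
      have h3 : t ≡ k [MOD q] := (Nat.modEq_iff_dvd).2 h2
      exact h (by rw [← h3, Nat.mod_eq_of_lt ht])

lemma residueSection_of_natDegree_lt {q t : ℕ} (ht : t < q) {f : ℤ[X]} (hf : f.natDegree < q) :
    residueSection q t f = C (f.coeff t) := by
  conv_lhs => rw [f.as_sum_range' q hf]
  rw [map_sum, Finset.sum_eq_single_of_mem t (Finset.mem_range.2 ht)]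
  · rw [residueSection_monomial, Nat.mod_eq_of_lt ht, if_pos rfl, Nat.div_eq_of_lt ht,
      monomial_zero_left]
  · intro k hk hkt
    rw [residueSection_monomial, Nat.mod_eq_of_lt (Finset.mem_range.1 hk), if_neg hkt]

lemma coeff_X_sub_one_pow (M k : ℕ) :
    ((X - 1 : ℤ[X]) ^ M).coeff k = (-1) ^ (M - k) * (M.choose k : ℤ) := by
  rw [← coeff_X_add_C_pow, C_neg, C_1, sub_eq_add_neg]

lemma residueSection_X_sub_one_pow {q s t : ℕ} (hs : s < q) (ht : t < q) :
    residueSection q t ((X - 1) ^ s) = C ((-1) ^ (s - t) * (s.choose t : ℤ)) := by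
  rw [residueSection_of_natDegree_lt ht, coeff_X_sub_one_pow]
  rw [← C_1, natDegree_pow, natDegree_X_sub_C]
  omega

lemma residueSum_one_eq_eval (f : ℤ[X]) : residueSum 1 0 0 f = f.eval 1 := by
  induction f using Polynomial.induction_on' with
  | add f₁ f₂ h₁ h₂ => rw [map_add, eval_add, h₁, h₂]
  | monomial k c => simp [residueSum_monomial, residueWeight]

lemma exists_residueSection_eq {p q t : ℕ} (ht : t < q) {f : ℤ[X]}
    (h : (p : ℤ) ∣ residueSum q t 0 f) :
    ∃ a b : ℤ[X], residueSection q t f = (X - 1) * a + C (p : ℤ) * b := by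
  have h1 := residueSum_mul_eq 1 ht 0 0 f
  rw [one_mul, mul_zero, zero_add, residueSum_one_eq_eval] at h1
  rw [h1] at h
  obtain ⟨b, hb⟩ := h
  obtain ⟨a, ha⟩ : (X - C (1 : ℤ)) ∣ residueSection q t f - C (p * b) := by
    rw [dvd_iff_isRoot, IsRoot.def, eval_sub, eval_C, hb, sub_self]
  refine ⟨a, C b, ?_⟩
  rw [C_1, C_mul] at ha
  linear_combination ha

lemma X_sub_one_pow_eq_sum (M : ℕ) : (X - 1 : ℤ[X]) ^ M =
    ∑ k ∈ range (M + 1), monomial k ((-1) ^ (M - k) * (M.choose k : ℤ)) := by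
  ext k
  rw [coeff_X_sub_one_pow, coeff_sum_range_monomial]
  split_ifs with h
  · rfl
  · rw [Nat.choose_eq_zero_of_lt (by omega), Nat.cast_zero, mul_zero]

lemma residueSum_X_sub_one_pow (q : ℕ) (r : ℤ) (l M : ℕ) : residueSum q r l ((X - 1) ^ M) =
    ∑ k ∈ range (M + 1), residueWeight q r l k * ((-1) ^ (M - k) * (M.choose k : ℤ)) := by
  rw [X_sub_one_pow_eq_sum, map_sum]
  exact Finset.sum_congr rfl fun k _ => residueSum_monomial _ _ _ _ _

lemma residueSum_X_sub_one_pow_eq_zero {q t M : ℕ} (hM : Odd M) (h : M ≡ 2 * t [MOD q]) :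
    residueSum q t 0 ((X - 1) ^ M) = 0 := by
  rw [residueSum_X_sub_one_pow]
  set F : ℕ → ℤ := fun k => residueWeight q t 0 k * ((-1) ^ (M - k) * (M.choose k : ℤ)) with hF
  have h1 := Finset.sum_flip F (n := M)
  have h2 : ∑ k ∈ range (M + 1), F (M - k) = - ∑ k ∈ range (M + 1), F k := by
    rw [← Finset.sum_neg_distrib]
    refine Finset.sum_congr rfl fun k hk => ?_
    have hkM : k ≤ M := Nat.lt_succ_iff.1 (Finset.mem_range.1 hk)
    have hpow : (-1 : ℤ) ^ k = - (-1) ^ (M - k) := by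
      have h3 : (-1 : ℤ) ^ (M - k) * (-1) ^ k = -1 := by
        rw [← pow_add, Nat.sub_add_cancel hkM, hM.neg_one_pow]
      have h4 : (-1 : ℤ) ^ (M - k) * (-1) ^ (M - k) = 1 := by
        rw [← mul_pow]
        simp
      linear_combination (-1) ^ (M - k) * h3 - (-1) ^ k * h4
    have hw : residueWeight q t 0 (M - k) = residueWeight q t 0 k := by
      simp only [residueWeight, Ring.choose_zero_right]
      refine if_congr ?_ rfl rfl
      have hd : (q : ℤ) ∣ 2 * t - M := by
        have := Nat.modEq_iff_dvd.1 h
        exact_mod_cast this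
      rw [← Int.dvd_iff_emod_eq_zero, ← Int.dvd_iff_emod_eq_zero, Nat.cast_sub hkM,
        show (M : ℤ) - k - t = -((2 * t - M) + (k - t)) by ring, Int.dvd_neg,
        dvd_add_right hd]
    simp only [hF]
    rw [hw, Nat.sub_sub_self hkM, Nat.choose_symm hkM, hpow]
    ring
  have h3 : ∑ k ∈ range (M + 1), F k = - ∑ k ∈ range (M + 1), F k := h1.symm.trans h2
  linarith

lemma dvd_residueSum_truncLog_mul {p : ℕ} (hp : p.Prime) {s t : ℕ}
    (h : (p ≠ 2 ∧ s = 2 * t) ∨ s = p - 1) :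
    (p : ℤ) ∣ residueSum p t 0 (truncLog p * (X - 1) ^ s) := by
  rcases h with ⟨hp2, rfl⟩ | rfl
  · have e : C (p : ℤ) * (truncLog p * (X - 1) ^ (2 * t)) =
        (X ^ p - 1) * (X - 1) ^ (2 * t) - (X - 1) ^ (p + 2 * t) := by
      rw [X_pow_sub_one_eq hp]
      ring
    have h1 := congrArg (residueSum p t 0) e
    rw [residueSum_C_mul, map_sub, residueSum_zero_mul, residueSum_X_sub_one_pow_eq_zero
      ((hp.odd_of_ne_two hp2).add_even (even_two_mul t)) (by simp [Nat.ModEq]), sub_zero] at h1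
    rw [(mul_eq_zero.1 h1).resolve_left (by exact_mod_cast hp.ne_zero)]
    exact dvd_zero _
  · have e : truncLog p * (X - 1) ^ (p - 1) = (X - 1) ^ p * logQuot p := by
      have h1 : (X - 1 : ℤ[X]) ^ p = (X - 1) * (X - 1) ^ (p - 1) :=
        (mul_pow_sub_one hp.ne_zero _).symm
      rw [h1, truncLog]
      ring
    rw [e]
    exact dvd_residueSum_of_X_sub_one_pow hp _ _

lemma exists_X_sub_one_pow_prime_pow (p : ℕ) [hp : Fact p.Prime] (e : ℕ) :
    ∃ u : ℤ[X], (X - 1) ^ p ^ e = expand ℤ (p ^ e) (X - 1) + C (p : ℤ) * u := by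
  obtain ⟨_, u, hu⟩ := exists_eq_of_map_dvd (p := p) (g := 0)
    (f := (X - 1) ^ p ^ e - expand ℤ (p ^ e) (X - 1)) (by simp [sub_pow_char_pow])
  exact ⟨u, by linear_combination hu⟩

lemma exists_X_sub_one_pow_prime_pow_succ (p : ℕ) [hp : Fact p.Prime] (e : ℕ) :
    ∃ h : ℤ[X], (X - 1) ^ (p * p ^ e) = expand ℤ (p * p ^ e) (X - 1) +
      C (p : ℤ) * (-expand ℤ (p ^ e) (truncLog p) + C (p : ℤ) * h) := by
  obtain ⟨u, hu⟩ := exists_X_sub_one_pow_prime_pow p e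
  obtain ⟨h, hh⟩ := dvd_sub_pow_of_dvd_sub (p := p) (a := (X - 1 : ℤ[X]) ^ p ^ e)
    (b := expand ℤ (p ^ e) (X - 1)) ⟨u, by rw [hu]; simp⟩ 1
  refine ⟨h, ?_⟩
  have h1 := congrArg (expand ℤ (p ^ e)) (X_pow_sub_one_eq hp.out)
  rw [mul_comm p, pow_mul]
  simp only [map_sub, map_add, map_mul, map_pow, map_one, expand_X, expand_C, pow_one,
    pow_mul] at h1 hh ⊢
  simp only [← C_eq_natCast] at hh
  linear_combination hh - h1

lemma exists_residueSection_truncLog {p : ℕ} [hp : Fact p.Prime] {e s t : ℕ} (ht : t < p * p ^ e)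
    (h : (p ≠ 2 ∧ s / p ^ e = 2 * (t / p ^ e)) ∨ s / p ^ e = p - 1) :
    ∃ a b : ℤ[X], residueSection (p * p ^ e) t (expand ℤ (p ^ e) (truncLog p) * (X - 1) ^ s) =
      (X - 1) * a + C (p : ℤ) * b := by
  have hQ : 0 < p ^ e := pow_pos hp.out.pos e
  have hs0 : s % p ^ e < p ^ e := Nat.mod_lt _ hQ
  have ht0 : t % p ^ e < p ^ e := Nat.mod_lt _ hQ
  have hst : p ^ e * (s / p ^ e) + s % p ^ e = s := Nat.div_add_mod _ _
  have htt : ((p ^ e : ℕ) : ℤ) * ((t / p ^ e : ℕ) : ℤ) + ((t % p ^ e : ℕ) : ℤ) = t := by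
    exact_mod_cast Nat.div_add_mod t (p ^ e)
  apply exists_residueSection_eq ht
  have h1 := dvd_residueSum_truncLog_mul hp.out h
  set s₁ := s / p ^ e
  set s₀ := s % p ^ e
  set t₁ := t / p ^ e
  set t₀ := t % p ^ e
  obtain ⟨u, hu⟩ := exists_X_sub_one_pow_prime_pow p e
  have hdvd : C (p : ℤ) ∣ (X - 1) ^ p ^ e - expand ℤ (p ^ e) (X - 1) :=
    ⟨u, by linear_combination hu⟩
  obtain ⟨v, hv⟩ := hdvd.trans (sub_dvd_pow_sub_pow _ _ s₁)
  have e1 : expand ℤ (p ^ e) (truncLog p) * (X - 1) ^ s =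
      expand ℤ (p ^ e) (truncLog p * (X - 1) ^ s₁) * (X - 1) ^ s₀ +
        C (p : ℤ) * (expand ℤ (p ^ e) (truncLog p) * v * (X - 1) ^ s₀) := by
    rw [← hst, pow_add, pow_mul, map_mul, map_pow]
    linear_combination (expand ℤ (p ^ e) (truncLog p) * (X - 1) ^ s₀) * hv
  rw [e1, map_add, residueSum_C_mul, ← htt, residueSum_mul_eq p ht0, residueSection_expand_mul hQ,
    residueSection_X_sub_one_pow hs0 ht0, mul_comm _ (C _), residueSum_C_mul]
  exact dvd_add (h1.mul_left _) (dvd_mul_right _ _)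

lemma exists_residueSection_sq_mul {Q : ℕ} (hQ : 0 < Q) (t : ℕ) (h f : ℤ[X]) :
    ∃ a b : ℤ[X], residueSection (2 * Q) t
      ((-expand ℤ Q (truncLog 2) + C ((2 : ℕ) : ℤ) * h) ^ 2 * f) =
        (X - 1) * a + C ((2 : ℕ) : ℤ) * b := by
  have h1 : truncLog 2 = X - 1 := by simp [truncLog, logQuot]
  have e1 : (-expand ℤ Q (truncLog 2) + C ((2 : ℕ) : ℤ) * h) ^ 2 * f =
      expand ℤ (2 * Q) (X - 1) * f + C ((2 : ℕ) : ℤ) *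
        ((-expand ℤ Q (X - 1) - 2 * h * expand ℤ Q (X - 1) + 2 * h ^ 2) * f) := by
    rw [h1]
    simp only [map_sub, map_one, expand_X, pow_mul', Nat.cast_ofNat, map_ofNat]
    ring
  exact ⟨_, _, by
    rw [e1, map_add, residueSection_expand_mul (by omega), residueSection_C_mul]⟩

lemma residueSection_X_sub_one_pow_sub_mem {p : ℕ} [hp : Fact p.Prime] {e n s t k : ℕ}
    (hs : s < p * p ^ e) (ht : t < p * p ^ e) (hk : k ≤ n + (p - 1))
    (h : p ∣ n ∨ k < n + (p - 1) ∨
      (p ≠ 2 ∧ s / p ^ e = 2 * (t / p ^ e)) ∨ s / p ^ e = p - 1) :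
    residueSection (p * p ^ e) t ((X - 1) ^ (p * p ^ e * n + s)) -
      C ((-1) ^ (s - t) * (s.choose t : ℤ)) * (X - 1) ^ n ∈ fleckIdeal p k := by
  have hp2 := hp.out.two_le
  have hQ : 0 < p ^ e := pow_pos hp.out.pos e
  have hq : 0 < p * p ^ e := Nat.mul_pos hp.out.pos hQ
  obtain ⟨g, hg⟩ := exists_X_sub_one_pow_prime_pow_succ p e
  set q := p * p ^ e with hqdef
  set T := expand ℤ (p ^ e) (truncLog p) with hT
  set V := -T + C (p : ℤ) * g with hV
  have term : ∀ i j (c : ℤ) (f : ℤ[X]), residueSection q t (expand ℤ q (X - 1) ^ i *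
      (C (p : ℤ) * V) ^ j * C c * f) =
        C (p : ℤ) ^ j * (X - 1) ^ i * (C c * residueSection q t (V ^ j * f)) := by
    intro i j c f
    rw [show expand ℤ q (X - 1) ^ i * (C (p : ℤ) * V) ^ j * C c * f =
      expand ℤ q ((X - 1) ^ i * C (p : ℤ) ^ j * C c) * (V ^ j * f) by
        rw [map_mul, map_mul, map_pow, map_pow, expand_C, expand_C, mul_pow]; ring, residueSection_expand_mul hq]
    ring
  rw [pow_add, pow_mul, hg, add_pow, Finset.sum_mul, map_sum]
  simp only [← C_eq_natCast]
  rw [Finset.sum_range_succ, add_sub_assoc]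
  refine add_mem (sum_mem fun i hi => ?_) ?_
  · rw [term]
    obtain ⟨j, rfl⟩ : ∃ j, n = i + (j + 1) :=
      ⟨n - i - 1, by have := Finset.mem_range.1 hi; omega⟩
    rw [Nat.add_sub_cancel_left]
    cases j with
    | zero =>
      rw [zero_add, pow_one V]
      have e1 : residueSection q t (V * (X - 1) ^ s) = -residueSection q t (T * (X - 1) ^ s) +
          C (p : ℤ) * residueSection q t (g * (X - 1) ^ s) := by
        rw [hV, add_mul, neg_mul, map_add, map_neg, mul_assoc, residueSection_C_mul]
      rw [e1]
      rcases h with ⟨d, hd⟩ | hlt | h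
      · rw [show (i + 1).choose i = p * d by rw [Nat.choose_succ_self_right]; omega]
        rw [Nat.cast_mul, C_mul]
        convert C_pow_mul_X_sub_one_pow_mul_mem hp.out (i := i) (e := 2) (k := k) (by omega)
          (C (d : ℤ) * (-residueSection q t (T * (X - 1) ^ s) +
            C (p : ℤ) * residueSection q t (g * (X - 1) ^ s))) using 1
        ring
      · exact C_pow_mul_X_sub_one_pow_mul_mem hp.out (by omega) _
      · obtain ⟨a, b, hab⟩ := exists_residueSection_truncLog ht h
        rw [hT, hab]
        set c := C (((i + 1).choose i : ℕ) : ℤ)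
        convert add_mem
          (C_pow_mul_X_sub_one_pow_mul_mem hp.out (i := i + 1) (e := 1) (k := k) (by omega)
            (-(c * a)))
          (C_pow_mul_X_sub_one_pow_mul_mem hp.out (i := i) (e := 2) (k := k) (by omega)
            (c * (residueSection q t (g * (X - 1) ^ s) - b))) using 1
        ring
    | succ j =>
      by_cases h2 : p = 2
      · subst h2
        obtain ⟨a, b, hab⟩ := exists_residueSection_sq_mul hQ t g (V ^ j * (X - 1) ^ s)
        have e1 : V ^ (j + 1 + 1) * (X - 1) ^ s = V ^ 2 * (V ^ j * (X - 1) ^ s) := by ring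
        rw [e1, hab]
        set c := C (((i + (j + 1 + 1)).choose i : ℕ) : ℤ)
        convert add_mem
          (C_pow_mul_X_sub_one_pow_mul_mem hp.out (i := i + 1) (e := j + 2) (k := k) (by omega)
            (c * a))
          (C_pow_mul_X_sub_one_pow_mul_mem hp.out (i := i) (e := j + 3) (k := k) (by omega)
            (c * b)) using 1
        ring
      · refine C_pow_mul_X_sub_one_pow_mul_mem hp.out ?_ _
        obtain ⟨d, rfl⟩ : ∃ d, p = d + 3 := ⟨p - 3, by omega⟩
        rw [show d + 3 - 1 = d + 2 by omega] at hk ⊢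
        nlinarith
  · rw [Nat.sub_self, term, pow_zero, pow_zero, one_mul, one_mul,
      residueSection_X_sub_one_pow hs ht, Nat.choose_self]
    simp [mul_comm]

lemma dvd_residueSum_sub {p : ℕ} [hp : Fact p.Prime] {a l n s t c : ℕ} (r : ℤ) (ha : 1 ≤ a)
    (hs : s < p ^ (a - 1)) (ht : t < p ^ (a - 1)) (hc : l * p + 1 + c * (p - 1) ≤ n)
    (h : a = 1 ∨ p ∣ n ∨ ¬ ((p : ℤ) - 1) ∣ (n : ℤ) - l - 1 ∨
      (2 ≤ a ∧ ((p ≠ 2 ∧ s / p ^ (a - 2) = 2 * (t / p ^ (a - 2))) ∨ s / p ^ (a - 2) = p - 1))) :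
    (p : ℤ) ^ (c + 1) ∣
      residueSum (p ^ a) ((p ^ (a - 1) : ℤ) * r + t) l ((X - 1) ^ (p ^ (a - 1) * n + s)) -
        (-1) ^ (s - t) * (s.choose t : ℤ) * residueSum p r l ((X - 1) ^ n) := by
  have hp2 := hp.out.two_le
  have hpa : p ^ a = p * p ^ (a - 1) := (mul_pow_sub_one (by omega) p).symm
  rw [hpa, ← Nat.cast_pow p (a - 1), residueSum_mul_eq p ht, ← residueSum_C_mul, ← map_sub]
  rcases Nat.lt_or_ge 1 a with ha2 | ha1
  · obtain ⟨e, rfl⟩ : ∃ e, a = e + 2 := ⟨a - 2, by omega⟩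
    rw [show e + 2 - 1 = e + 1 by omega, pow_succ' p e] at hs ht ⊢
    rw [Nat.add_sub_cancel] at h
    by_cases hlt : l * p + 1 + c * (p - 1) < n
    · have h1 := residueSection_X_sub_one_pow_sub_mem (n := n) (k := n + (p - 1) - 1) hs ht (by omega)
        (Or.inr (Or.inl (by omega)))
      exact mem_fleckIdeal.1 h1 r l (c + 1) (by rw [add_mul, one_mul]; omega)
    · suffices h1 : p ∣ n ∨ n + (p - 1) < n + (p - 1) ∨
          (p ≠ 2 ∧ s / p ^ e = 2 * (t / p ^ e)) ∨ s / p ^ e = p - 1 from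
        dvd_residueSum_of_mem (residueSection_X_sub_one_pow_sub_mem hs ht le_rfl h1) r hc
      rcases h with h | h | h | h
      · omega
      · exact Or.inl h
      · refine absurd ⟨(l + c : ℤ), ?_⟩ h
        obtain ⟨d, rfl⟩ : ∃ d, p = d + 1 := ⟨p - 1, by omega⟩
        have hn : n = l * (d + 1) + 1 + c * (d + 1 - 1) := by omega
        rw [hn]
        push_cast [Nat.add_sub_cancel]
        ring
      · exact Or.inr (Or.inr h.2)
  · obtain rfl : a = 1 := by omega
    rw [Nat.sub_self, pow_zero] at hs ht ⊢
    have h1 : residueSection 1 t ((X - 1) ^ (1 * n + s)) =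
        C ((-1) ^ (s - t) * (s.choose t : ℤ)) * (X - 1) ^ n := by
      rw [← residueSection_X_sub_one_pow hs ht, mul_comm (residueSection 1 t _), ← residueSection_expand_mul one_pos,
        expand_one, one_mul, pow_add]
    rw [h1, sub_self, map_zero]
    exact dvd_zero _

lemma intBinom_eq_choose (x : ℤ) (l : ℕ) : intBinom x l = (Ring.choose x l : ℤ) := by
  have h := Ring.descPochhammer_eq_factorial_smul_choose x l
  rw [← eval_eq_smeval, descPochhammer_eval_eq_prod_range, nsmul_eq_mul] at h
  rw [intBinom, div_eq_iff (by positivity), mul_comm]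
  exact_mod_cast h

lemma Fpa_eq (p a l n : ℕ) (r : ℤ) : Fpa p a l n r =
    (-(p : ℚ)) ^ (-(Int.fdiv ((n : ℤ) - (l : ℤ) * (p : ℤ) ^ a - (p : ℤ) ^ (a - 1))
      (Nat.totient (p ^ a)))) * (((-1) ^ n * residueSum (p ^ a) r l ((X - 1) ^ n) : ℤ) : ℚ) := by
  rw [Fpa, residueSum_X_sub_one_pow]
  congr 1
  rw [Finset.mul_sum, Int.cast_sum]
  refine Finset.sum_congr rfl fun k hk => ?_
  have hkn : k ≤ n := Nat.lt_succ_iff.1 (Finset.mem_range.1 hk)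
  have hpow : (-1 : ℚ) ^ k = (-1) ^ n * (-1) ^ (n - k) := by
    obtain ⟨j, rfl⟩ := Nat.exists_eq_add_of_le hkn
    rw [Nat.add_sub_cancel_left, pow_add, mul_assoc, ← mul_pow]
    simp
  rw [residueWeight, Nat.cast_pow]
  split_ifs
  · rw [intBinom_eq_choose, hpow]
    push_cast
    ring
  · simp

lemma fdiv_totient_eq {p a : ℕ} (hp : p.Prime) (ha : 1 ≤ a) (l n : ℕ) {s : ℕ}
    (hs : s < p ^ (a - 1)) :
    Int.fdiv (((p ^ (a - 1) * n + s : ℕ) : ℤ) - (l : ℤ) * (p : ℤ) ^ a - (p : ℤ) ^ (a - 1))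
      (Nat.totient (p ^ a)) = ((n : ℤ) - l * p - 1) / ((p : ℤ) - 1) := by
  obtain ⟨e, rfl⟩ : ∃ e, a = e + 1 := ⟨a - 1, by omega⟩
  rw [Nat.add_sub_cancel] at hs ⊢
  have hq : (0 : ℤ) < (p : ℤ) ^ e := by have := hp.pos; positivity
  rw [Int.fdiv_eq_ediv_of_nonneg _ (by positivity), Nat.totient_prime_pow_succ hp, Nat.cast_mul,
    Nat.cast_pow, Nat.cast_sub hp.one_le, Nat.cast_one, ← Int.ediv_ediv_of_nonneg hq.le]
  congr 1
  rw [show ((p ^ e * n + s : ℕ) : ℤ) - (l : ℤ) * (p : ℤ) ^ (e + 1) - (p : ℤ) ^ e =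
    s + (p : ℤ) ^ e * ((n : ℤ) - l * p - 1) by push_cast; ring,
    Int.add_mul_ediv_left _ _ hq.ne', Int.ediv_eq_zero_of_lt (by positivity) (by exact_mod_cast hs),
    zero_add]

lemma nLow_eq {p x : ℕ} (hp : 2 ≤ p) (hx : 0 < x) : nLow p x = (x - 1) % (p - 1) + 1 := by
  rw [nLow, show (x : ℤ) - 1 = ((x - 1 : ℕ) : ℤ) by omega,
    show (p : ℤ) - 1 = ((p - 1 : ℕ) : ℤ) by omega]
  omega

lemma nUp_eq {p x : ℕ} (hp : 2 ≤ p) (hx : 0 < x) : nUp p x = p - 2 - (x - 1) % (p - 1) := by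
  have hlt : (x - 1) % (p - 1) < p - 1 := Nat.mod_lt _ (by omega)
  have hdm := Nat.div_add_mod (x - 1) (p - 1)
  rw [nUp, show (p : ℤ) - 1 = ((p - 1 : ℕ) : ℤ) by omega]
  have e : (-(x : ℤ)) = ((p - 2 - (x - 1) % (p - 1) : ℕ) : ℤ) +
      ((p - 1 : ℕ) : ℤ) * (-((((x - 1) / (p - 1) : ℕ) : ℤ) + 1)) := by
    rw [mul_neg, mul_add, mul_one]
    have hdm' : ((p - 1 : ℕ) : ℤ) * (((x - 1) / (p - 1) : ℕ) : ℤ) +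
        (((x - 1) % (p - 1) : ℕ) : ℤ) = ((x - 1 : ℕ) : ℤ) := by exact_mod_cast hdm
    generalize ((p - 1 : ℕ) : ℤ) * (((x - 1) / (p - 1) : ℕ) : ℤ) = y at hdm' ⊢
    omega
  rw [e, Int.add_mul_emod_self_left, Int.emod_eq_of_lt (by positivity) (by omega), Int.toNat_natCast]

lemma factorial_mul_factorial_zmod {p : ℕ} [hp : Fact p.Prime] (j k : ℕ) (h : j + k + 1 = p) :
    (j.factorial : ZMod p) * (k.factorial : ZMod p) = (-1) ^ (j + 1) := by
  induction j generalizing k with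
  | zero =>
    obtain rfl : k = p - 1 := by omega
    simp [ZMod.wilsons_lemma]
  | succ j ih =>
    have h1 := ih (k + 1) (by omega)
    have h2 : ((j + k + 1 + 1 : ℕ) : ZMod p) = 0 := by
      rw [show j + k + 1 + 1 = p by omega, ZMod.natCast_self]
    rw [Nat.factorial_succ] at h1 ⊢
    push_cast at h1 h2 ⊢
    rw [pow_succ, ← h1]
    linear_combination (j.factorial * k.factorial : ZMod p) * h2

lemma neg_one_pow_mul_factorial {p : ℕ} [hp : Fact p.Prime] {a l n s t j k x : ℕ}
    (hjk : j + k + 1 = p) (hn : n = l + x * (p - 1) + j) (hts : t ≤ s) :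
    (-1 : ZMod p) ^ (l + t + 1 + (p ^ a * n + s) + (s - t)) =
      (j.factorial : ZMod p) * (k.factorial : ZMod p) := by
  rw [factorial_mul_factorial_zmod j k hjk]
  rcases hp.out.eq_two_or_odd' with rfl | hodd
  · rw [show (-1 : ZMod 2) = 1 from rfl, one_pow, one_pow]
  · apply neg_one_pow_congr
    have h1 : Even (p - 1) := Nat.Odd.sub_odd hodd odd_one
    have h2 : Odd (p ^ a) := hodd.pow
    obtain ⟨d, rfl⟩ := Nat.exists_eq_add_of_le hts
    rw [Nat.add_sub_cancel_left, hn]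
    have h3 := Nat.not_even_iff_odd.2 h2
    simp only [Nat.even_add, Nat.even_mul, h1, h3]
    tauto

lemma reducesTo_Fpa {p : ℕ} [hp : Fact p.Prime] {a l n m s t : ℕ} (r : ℤ) (ha : 1 ≤ a)
    (hs : s < p ^ (a - 1)) (ht : t < p ^ (a - 1)) (hmn : p ∣ m + n) (hln : l * p + 1 ≤ n)
    (h : a = 1 ∨ p ∣ n ∨ ¬ ((p : ℤ) - 1) ∣ (n : ℤ) - l - 1 ∨
      (2 ≤ a ∧ ((p ≠ 2 ∧ s / p ^ (a - 2) = 2 * (t / p ^ (a - 2))) ∨ s / p ^ (a - 2) = p - 1))) :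
    ∃ y : ZMod p,
      ReducesTo p ((-1 : ℚ) ^ (l + t + 1) *
        Fpa p a l (p ^ (a - 1) * n + s) ((p ^ (a - 1) : ℤ) * r + (t : ℤ))) y ∧
      ReducesTo p ((s.choose t : ℚ) * (((n - l - 1) / (p - 1)).choose l : ℚ) *
        ((nLow p (n - l)).factorial : ℚ) * bernHigherPoly m (nUp p (n - l)) (-(r : ℚ))) y := by
  have hp2 := hp.out.two_le
  have hl : l < n := (Nat.le_mul_of_pos_right l (by omega : 0 < p)).trans_lt (by omega)
  rw [nLow_eq hp2 (by omega), nUp_eq hp2 (by omega)]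
  have hlt : (n - l - 1) % (p - 1) < p - 1 := Nat.mod_lt _ (by omega)
  have hdm := Nat.div_add_mod' (n - l - 1) (p - 1)
  have hlN : l ≤ (n - l - 1) / (p - 1) := by
    rw [Nat.le_div_iff_mul_le (by omega), Nat.mul_sub_one]
    omega
  set N := (n - l - 1) / (p - 1) with hN
  set j := (n - l - 1) % (p - 1) + 1 with hj
  set k := p - 2 - (n - l - 1) % (p - 1) with hk
  obtain ⟨c, hc⟩ := Nat.exists_eq_add_of_le hlN
  have hnj : n = l + N * (p - 1) + j := by omega
  have hNk : n + k = l + (N + 1) * (p - 1) := by rw [add_mul]; omega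
  have hcn : l * p + 1 + c * (p - 1) ≤ n := by
    rw [hnj, hc, add_mul, Nat.mul_sub_one l p]
    have := Nat.le_mul_of_pos_right l hp.out.pos
    omega
  obtain ⟨b, hb, u, hu⟩ := exists_residueSum_X_sub_one_pow r hmn (by omega) hNk hln
  obtain ⟨v, hv⟩ := dvd_residueSum_sub r ha hs ht hcn h
  rw [hc, Nat.add_sub_cancel_left, ← hc] at hu
  set S := residueSum (p ^ a) ((p ^ (a - 1) : ℤ) * r + t) l ((X - 1) ^ (p ^ (a - 1) * n + s))
  have hexp : ((n : ℤ) - l * p - 1) / ((p : ℤ) - 1) = c := by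
    have hp1 : (p : ℤ) - 1 = ((p - 1 : ℕ) : ℤ) := by omega
    have e1 : (n : ℤ) - l * p - 1 = (((n - l - 1) % (p - 1) : ℕ) : ℤ) +
        c * ((p - 1 : ℕ) : ℤ) := by
      have h1 : (n : ℤ) = l + (l + c) * ((p - 1 : ℕ) : ℤ) +
          ((((n - l - 1) % (p - 1) : ℕ) : ℤ) + 1) := by
        rw [hc, hj] at hnj
        exact_mod_cast hnj
      linear_combination h1 - (l : ℤ) * hp1
    rw [e1, hp1, Int.add_mul_ediv_right _ _ (by omega),
      Int.ediv_eq_zero_of_lt (by positivity) (by exact_mod_cast hlt), zero_add]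
  have hS : S = (-(p : ℤ)) ^ c * ((-1) ^ (s - t) * (s.choose t : ℤ) * (b * N.choose l) +
      p * ((-1) ^ c * (v + (-1) ^ (s - t) * (s.choose t : ℤ) * u))) := by
    have h1 : (-(p : ℤ)) ^ c = (-1) ^ c * (p : ℤ) ^ c := by rw [← mul_pow]; simp
    have h2 : ((-1 : ℤ)) ^ c * (-1) ^ c = 1 := by rw [← mul_pow]; simp
    rw [h1] at hu ⊢
    linear_combination hv + (-1) ^ (s - t) * (s.choose t : ℤ) * hu -
      (p : ℤ) ^ (c + 1) * (v + (-1) ^ (s - t) * (s.choose t : ℤ) * u) * h2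
  refine ⟨_, ?_, ((((ReducesTo.natCast p _).mul (ReducesTo.natCast p _)).mul
    (ReducesTo.natCast p _)).mul hb)⟩
  have hp0 : (-(p : ℚ)) ^ c ≠ 0 := pow_ne_zero _ (by simpa using hp.out.ne_zero)
  rw [Fpa_eq, fdiv_totient_eq hp.out ha l n hs, hexp, zpow_neg, zpow_natCast]
  set Z : ℤ := (-1) ^ (l + t + 1) * ((-1) ^ (p ^ (a - 1) * n + s) *
    ((-1) ^ (s - t) * (s.choose t : ℤ) * (b * N.choose l) +
      p * ((-1) ^ c * (v + (-1) ^ (s - t) * (s.choose t : ℤ) * u)))) with hZ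
  have e1 : (-1 : ℚ) ^ (l + t + 1) * (((-(p : ℚ)) ^ c)⁻¹ *
      (((-1) ^ (p ^ (a - 1) * n + s) * S : ℤ) : ℚ)) = (Z : ℚ) := by
    rw [hS, hZ]
    push_cast
    field_simp
  rw [e1]
  convert ReducesTo.intCast p Z using 1
  rw [hZ]
  push_cast
  rw [ZMod.natCast_self, zero_mul, add_zero]
  rcases Nat.lt_or_ge s t with hst | hts
  · simp [Nat.choose_eq_zero_of_lt hst]
  · have h1 := neg_one_pow_mul_factorial (p := p) (a := a - 1) (k := k) (by omega) hnj hts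
    rw [pow_add _ _ (s - t), pow_add _ (l + t + 1)] at h1
    linear_combination -((s.choose t : ZMod p) * N.choose l * b) * h1

lemma Fpa_eq_prime_mul {p : ℕ} (hp : p.Prime) {a l n s : ℕ} (R : ℤ) (ha : 1 ≤ a)
    (hs : s < p ^ (a - 1)) (hln : n ≤ l * p) :
    ∃ z : ℤ, Fpa p a l (p ^ (a - 1) * n + s) R = ((p * z : ℤ) : ℚ) := by
  have hneg : ((n : ℤ) - l * p - 1) / ((p : ℤ) - 1) < 0 := by
    have := hp.two_le
    apply Int.ediv_neg_of_neg_of_pos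
    · have : (n : ℤ) ≤ l * p := by exact_mod_cast hln
      linarith
    · omega
  obtain ⟨d, hd⟩ : ∃ d : ℕ, -(((n : ℤ) - l * p - 1) / ((p : ℤ) - 1)) = ((d + 1 : ℕ) : ℤ) :=
    ⟨(-(((n : ℤ) - l * p - 1) / ((p : ℤ) - 1)) - 1).toNat, by omega⟩
  rw [Fpa_eq, fdiv_totient_eq hp ha l n hs, hd, zpow_natCast]
  set w := (-1) ^ (p ^ (a - 1) * n + s) * residueSum (p ^ a) R l ((X - 1) ^ (p ^ (a - 1) * n + s))
  refine ⟨-(-(p : ℤ)) ^ d * w, ?_⟩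
  push_cast
  ring

end FleckQuotient

theorem stmt19 (p a l n m s t : ℕ) (r : ℤ) (hp : p.Prime) (ha : 1 ≤ a)
    (hs : s < p^(a-1)) (ht : t < p^(a-1))
    (hm : (m:ℤ) ≡ -(n:ℤ) [ZMOD (p:ℤ)])
    (hcase : (a = 1 ∨ p ∣ n ∨ ¬ (((p:ℤ) - 1) ∣ ((n:ℤ) - (l:ℤ) - 1)))
      ∨ (2 ≤ a ∧ p ≠ 2 ∧ s / p^(a-2) = 2 * (t / p^(a-2)))
      ∨ (2 ≤ a ∧ s / p^(a-2) = p - 1 ∧ t / p^(a-2) = p - 1)) :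
    modCong p 1
      ((-1:ℚ)^(l+t+1) * Fpa p a l (p^(a-1)*n + s) ((p^(a-1) : ℤ) * r + (t:ℤ)))
      (if l < n then
        (s.choose t : ℚ) * (((n-l-1)/(p-1)).choose l : ℚ) *
          ((nLow p (n-l)).factorial : ℚ) * bernHigherPoly m (nUp p (n-l)) (-(r:ℚ))
       else 0) := by
  have : Fact p.Prime := ⟨hp⟩
  have hp2 := hp.two_le
  have hmn : p ∣ m + n := by
    have h1 := (Int.ModEq.add_right (n : ℤ) hm).symm.dvd
    rw [neg_add_cancel, sub_zero] at h1
    exact_mod_cast h1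
  rcases Nat.lt_or_ge (l * p) n with hln | hln
  · have hl : l < n := (Nat.le_mul_of_pos_right l (by omega : 0 < p)).trans_lt hln
    rw [if_pos hl]
    obtain ⟨y, h1, h2⟩ := FleckQuotient.reducesTo_Fpa r ha hs ht hmn hln (by tauto)
    exact h1.modCong h2
  · obtain ⟨z, hz⟩ := FleckQuotient.Fpa_eq_prime_mul hp ((p^(a-1) : ℤ) * r + (t:ℤ)) ha hs hln
    have h0 : FleckQuotient.ReducesTo p ((-1 : ℚ) ^ (l + t + 1) * ((p * z : ℤ) : ℚ)) 0 := by
      simpa using FleckQuotient.ReducesTo.intCast p ((-1) ^ (l + t + 1) * (p * z))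
    have h1 : FleckQuotient.ReducesTo p 0 0 := by simpa using FleckQuotient.ReducesTo.natCast p 0
    rw [hz]
    refine h0.modCong ?_
    split_ifs with hl
    · have hlt : (n - l - 1) / (p - 1) < l := by
        rw [Nat.div_lt_iff_lt_mul (by omega), Nat.mul_sub_one]
        omega
      rw [Nat.choose_eq_zero_of_lt hlt]
      simpa using h1
    · exact h1
end
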